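/- Let n ≥ 2 and let K ⊂ ℝ^{n+1} be a smooth, strictly convex body with the origin in its interior, whose support function h, radial function r, and Gauss curvature 𝒦 satisfy h^{p-1} |Dh|^{n+1-q} 𝒦 = 1 on S^n, with −(n+1) < p and n ≤ q ≤ n+1. Set α = q − n − 1 and dV = h σ_n dμ with σ_n = 1/𝒦. Then ∫ | r^{α} ∇̄h − (∫ r^{α} ∇̄h dV)/(∫ dV) |² dV ≤ ((p+1)/n) |∫ r^{α} ∇̄h dV|² / ∫ dV, where |·| is the Euclidean norm on ℝ^{n+1}. In particular, if in addition p ≤ −1, then h is constant. -/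

import Mathlib

open MeasureTheory Matrix Metric
open scoped RealInnerProductSpace

noncomputable section

/-- Euclidean space `ℝ^{n+1}`. -/
abbrev Euc (n : ℕ) : Type := EuclideanSpace ℝ (Fin (n + 1))

/-- The Euclidean Hessian matrix of `H : ℝ^{n+1} → ℝ` at `x`. -/
def ehess (n : ℕ) (H : Euc n → ℝ) (x : Euc n) : Matrix (Fin (n + 1)) (Fin (n + 1)) ℝ :=
  Matrix.of fun i j =>
    fderiv ℝ (fun y => fderiv ℝ H y (EuclideanSpace.single j 1)) x (EuclideanSpace.single i 1)

/-- For the 1-homogeneous extension `H` of the support function `h` and `x ∈ S^n`, the matrix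
`D²H(x) + h(x)·x xᵀ`.  Its restriction to the tangent space `x^⊥ = T_x S^n` is
`A[h] = ∇̄²h + h ḡ`, and `x` is an eigenvector with eigenvalue `h(x)`. -/
def bmat (n : ℕ) (H : Euc n → ℝ) (x : Euc n) : Matrix (Fin (n + 1)) (Fin (n + 1)) ℝ :=
  ehess n H x + Matrix.of fun i j => H x * (x i * x j)

/-- `σ_n = det A[h] = det(∇̄²h + h ḡ)/det ḡ`, computed as `det(bmat)/h`. -/
def sigman (n : ℕ) (H : Euc n → ℝ) (x : Euc n) : ℝ :=
  Matrix.det (bmat n H x) / H x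

/-- The Gauss curvature `𝒦 = 1/σ_n`. -/
def gaussCurv (n : ℕ) (H : Euc n → ℝ) (x : Euc n) : ℝ := (sigman n H x)⁻¹

/-- The round (spherical) gradient `∇̄f` at `x ∈ S^n`: the Euclidean gradient of the
0-homogeneous extension `y ↦ f(y/‖y‖)`.  It depends only on `f|_{S^n}` and lies in `T_x S^n`. -/
def sphGrad (n : ℕ) (f : Euc n → ℝ) (x : Euc n) : Euc n :=
  gradient (fun y => f (‖y‖⁻¹ • y)) x

/-- The function `log (h^{n+2}/𝒦)` (as a function of `y`; on the sphere it agrees with the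
centro-affine expression appearing in the paper). -/
def logQ (n : ℕ) (H : Euc n → ℝ) (y : Euc n) : ℝ :=
  Real.log ((H y) ^ (n + 2) / gaussCurv n H y)

/-- The centro-affine inner product `g(∇f, ∇u) = h ⟨A[h]⁻¹ ∇̄f, ∇̄u⟩` of the `g`-gradients of
`f` and `u`, where `g = A[h]/h` is the centro-affine metric. -/
def gInner (n : ℕ) (H f u : Euc n → ℝ) (x : Euc n) : ℝ :=
  H x * ∑ i, (bmat n H x)⁻¹.mulVec (fun j => sphGrad n f x j) i * sphGrad n u x i

/-- The squared centro-affine norm `|∇f|_g²` of the `g`-gradient of `f`. -/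
def gNormSq (n : ℕ) (H f : Euc n → ℝ) (x : Euc n) : ℝ := gInner n H f f x

/-- The centro-affine Laplacian `Δf = div_g(∇ f)` (with respect to the centro-affine connection
`∇` induced by the centro-affine normal `ξ = X`, and the centro-affine metric `g = A[h]/h`),
computed via the identity `Δf = tr_g(A[hf]/h) - n f`, i.e.
`Δf = tr(B[h]⁻¹ B[hf]) - (n+1) f` where `B[u] = D²ũ + u·x xᵀ` for the 1-homogeneous
extension `ũ` of `u`. -/
def caLap (n : ℕ) (H f : Euc n → ℝ) (x : Euc n) : ℝ :=
  Matrix.trace ((bmat n H x)⁻¹ * bmat n (fun y => H y * f (‖y‖⁻¹ • y)) x) - (n + 1) * f x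

/-- The spherical Lebesgue measure on `S^n ⊂ ℝ^{n+1}` (up to a positive constant). -/
def sphMeasure (n : ℕ) : Measure (sphere (0 : Euc n) 1) :=
  (volume : Measure (Euc n)).toSphere

/-- The density of the cone-volume-type measure `dV = h σ_n dμ` with respect to the spherical
Lebesgue measure. -/
def volDens (n : ℕ) (H : Euc n → ℝ) (x : Euc n) : ℝ := H x * sigman n H x

/-!
Write `X = ∇H` for the inverse Gauss map and `r = |X|`. By the Brunn–Minkowski inequality the
volume of the body with support function `H + t u`, to the power `1 / (n + 1)`, is concave in `t`.
Its second variation at `t = 0` is a Poincaré inequality: `n` times the variance of a function `f`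
with respect to `dV = h σ_n dμ` is at most `∫ h ⟨A[h]⁻¹ ∇̄f, ∇̄f⟩ dV`. Apply it to the components
of the vector field `F = r^α X`. For `-1 ≤ α ≤ 0` the sum of the Dirichlet densities is bounded
pointwise by `h² σ_n r^α div F`, which the curvature equation turns into `h^{p+1} div F`;
integrating by parts on the sphere then bounds `∫ |r^α ∇̄h|² dV` by a multiple of `|∫ F dV|²`, and
the divergence theorem for `h^{p+1}` relates `∫ F dV` to `∫ r^α ∇̄h dV`. If `p ≤ -1`, the variance
of `r^α ∇̄h` vanishes, so this tangent field is constant, hence zero.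
-/

section PrekopaLeindler

open Set
open scoped ENNReal Pointwise

lemma volume_add_volume_le_of_isCompact {A B : Set ℝ} (hA : IsCompact A) (hB : IsCompact B)
    (hA₀ : A.Nonempty) (hB₀ : B.Nonempty) : volume A + volume B ≤ volume (A + B) := by
  obtain ⟨a, haA, ha⟩ := hA.exists_isGreatest hA₀
  obtain ⟨b, hbB, hb⟩ := hB.exists_isLeast hB₀
  have overlap : (b +ᵥ A) ∩ (a +ᵥ B) ⊆ {a + b} := by
    rintro _ ⟨⟨x, hx, rfl⟩, y, hy, hxy⟩
    have hxa := ha hx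
    have hby := hb hy
    simp only [vadd_eq_add, mem_singleton_iff] at hxy ⊢
    linarith
  calc volume A + volume B = volume (b +ᵥ A) + volume (a +ᵥ B) := by simp only [measure_vadd]
    _ = volume ((b +ᵥ A) ∪ (a +ᵥ B)) :=
        (measure_union₀ (hB.vadd a).measurableSet.nullMeasurableSet
          (measure_mono_null overlap (by simp))).symm
    _ ≤ volume (A + B) := by
        gcongr
        refine union_subset ?_ (vadd_set_subset_add haA)
        rw [add_comm]
        exact vadd_set_subset_add hbB

lemma volume_add_volume_le {A B : Set ℝ} (hA : MeasurableSet A) (hB : MeasurableSet B)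
    (hA₀ : A.Nonempty) (hB₀ : B.Nonempty) : volume A + volume B ≤ volume (A + B) := by
  obtain ⟨a, ha⟩ := hA₀
  obtain ⟨b, hb⟩ := hB₀
  rw [hA.measure_eq_iSup_isCompact, hB.measure_eq_iSup_isCompact]
  simp only [iSup_and']
  refine ENNReal.biSup_add_biSup_le' (p := fun K ↦ K ⊆ A ∧ IsCompact K)
    (q := fun L ↦ L ⊆ B ∧ IsCompact L) ⟨∅, empty_subset A, isCompact_empty⟩
    ⟨∅, empty_subset B, isCompact_empty⟩ fun K ⟨hKA, hK⟩ L ⟨hLB, hL⟩ ↦ ?_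
  calc volume K + volume L ≤ volume (insert a K) + volume (insert b L) := by gcongr <;> simp
    _ ≤ volume (insert a K + insert b L) :=
        volume_add_volume_le_of_isCompact (hK.insert a) (hL.insert b) (insert_nonempty _ _)
          (insert_nonempty _ _)
    _ ≤ volume (A + B) := by
        gcongr
        · exact insert_subset ha hKA
        · exact insert_subset hb hLB

lemma lintegral_eq_lintegral_measure_ofReal_lt {α : Type*} [MeasurableSpace α] (μ : Measure α)
    [SFinite μ] {f : α → ℝ≥0∞} (hf : Measurable f) :
    ∫⁻ x, f x ∂μ = ∫⁻ t in Ioi (0 : ℝ), μ {x | ENNReal.ofReal t < f x} := by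
  have volume_levels (c : ℝ≥0∞) :
      ∫⁻ t in Ioi (0 : ℝ), {s : ℝ | ENNReal.ofReal s < c}.indicator 1 t = c := by
    rw [lintegral_indicator_one (measurableSet_lt (by fun_prop) measurable_const),
      Measure.restrict_apply (measurableSet_lt (by fun_prop) measurable_const)]
    induction c with
    | top => simp
    | coe c =>
      have : {s : ℝ | ENNReal.ofReal s < c} ∩ Ioi 0 = Ioo 0 (c : ℝ) := by
        ext s
        simp only [mem_inter_iff, mem_ofPred_eq, mem_Ioi, mem_Ioo, and_comm (b := 0 < s)]
        refine and_congr_right fun hs ↦ ?_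
        rw [ENNReal.ofReal_lt_coe_iff hs.le]
      simp [this]
  calc ∫⁻ x, f x ∂μ
      = ∫⁻ x, (∫⁻ t in Ioi (0 : ℝ), {s : ℝ | ENNReal.ofReal s < f x}.indicator 1 t) ∂μ := by
        simp only [volume_levels]
    _ = ∫⁻ t in Ioi (0 : ℝ), ∫⁻ x, {y | ENNReal.ofReal t < f y}.indicator 1 x ∂μ := by
        refine lintegral_lintegral_swap (Measurable.aemeasurable ?_)
        exact measurable_one.indicator
          (s := {z : α × ℝ | ENNReal.ofReal z.2 < f z.1})
          (measurableSet_lt (by fun_prop) (by fun_prop))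
    _ = _ := by
        simp only [lintegral_indicator_one (measurableSet_lt measurable_const hf)]

variable {a b : ℝ}

lemma ennreal_geom_mean_le_arith_mean (ha : 0 < a) (hb : 0 < b) (hab : a + b = 1) (x y : ℝ≥0∞) :
    x ^ a * y ^ b ≤ ENNReal.ofReal a * x + ENNReal.ofReal b * y := by
  have hconj : a⁻¹.HolderConjugate b⁻¹ :=
    Real.holderConjugate_iff.2 ⟨(one_lt_inv₀ ha).2 (by linarith), by simpa using hab⟩
  refine (ENNReal.young_inequality (x ^ a) (y ^ b) hconj).trans_eq ?_
  rw [← ENNReal.rpow_mul, ← ENNReal.rpow_mul, mul_inv_cancel₀ ha.ne', mul_inv_cancel₀ hb.ne',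
    ENNReal.rpow_one, ENNReal.rpow_one, ENNReal.ofReal_inv_of_pos ha, ENNReal.ofReal_inv_of_pos hb,
    div_eq_mul_inv, div_eq_mul_inv, inv_inv, inv_inv, mul_comm x, mul_comm y]

-- Where both level sets are nonempty, their weighted Minkowski sum lies in the level set of `k`.
lemma arith_mean_lintegral_le_of_iSup_eq_one (ha : 0 < a) (hb : 0 < b) (hab : a + b = 1)
    {f g k : ℝ → ℝ≥0∞} (hf : Measurable f) (hg : Measurable g) (hk : Measurable k)
    (hf₁ : ⨆ x, f x = 1) (hg₁ : ⨆ x, g x = 1)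
    (h : ∀ x y, f x ^ a * g y ^ b ≤ k (a • x + b • y)) :
    ENNReal.ofReal a * (∫⁻ x, f x) + ENNReal.ofReal b * (∫⁻ x, g x) ≤ ∫⁻ x, k x := by
  have measurable_level (u : ℝ → ℝ≥0∞) :
      Measurable fun t : ℝ ↦ volume {x | ENNReal.ofReal t < u x} :=
    Antitone.measurable fun s t hst ↦ measure_mono fun x hx ↦
      (ENNReal.ofReal_le_ofReal hst).trans_lt hx
  rw [lintegral_eq_lintegral_measure_ofReal_lt _ hf, lintegral_eq_lintegral_measure_ofReal_lt _ hg,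
    lintegral_eq_lintegral_measure_ofReal_lt _ hk, ← lintegral_const_mul _ (measurable_level f),
    ← lintegral_const_mul _ (measurable_level g),
    ← lintegral_add_left ((measurable_level f).const_mul _)]
  refine lintegral_mono fun t ↦ ?_
  set s := ENNReal.ofReal t
  rcases lt_or_ge s 1 with hs | hs
  · have hfs : {x | s < f x}.Nonempty := lt_iSup_iff.1 (hs.trans_eq hf₁.symm)
    have hgs : {x | s < g x}.Nonempty := lt_iSup_iff.1 (hs.trans_eq hg₁.symm)
    have level_add_subset : a • {x | s < f x} + b • {x | s < g x} ⊆ {x | s < k x} := by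
      rintro _ ⟨_, ⟨x, hx, rfl⟩, _, ⟨y, hy, rfl⟩, rfl⟩
      calc s = s ^ a * s ^ b := by
            rw [← ENNReal.rpow_add_of_nonneg _ _ ha.le hb.le, hab, ENNReal.rpow_one]
        _ < f x ^ a * g y ^ b :=
            ENNReal.mul_lt_mul (ENNReal.rpow_lt_rpow hx ha) (ENNReal.rpow_lt_rpow hy hb)
        _ ≤ k (a • x + b • y) := h x y
    calc ENNReal.ofReal a * volume {x | s < f x} + ENNReal.ofReal b * volume {x | s < g x}
        = volume (a • {x | s < f x}) + volume (b • {x | s < g x}) := by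
          simp only [Measure.addHaar_smul, Module.finrank_self, pow_one, abs_of_pos ha,
            abs_of_pos hb]
      _ ≤ volume (a • {x | s < f x} + b • {x | s < g x}) :=
          volume_add_volume_le ((measurableSet_lt measurable_const hf).const_smul₀ a)
            ((measurableSet_lt measurable_const hg).const_smul₀ b) hfs.smul_set hgs.smul_set
      _ ≤ volume {x | s < k x} := measure_mono level_add_subset
  · have level_eq_empty {u : ℝ → ℝ≥0∞} (hu : ⨆ x, u x = 1) : {x | s < u x} = ∅ :=
      eq_empty_of_forall_notMem fun x hx ↦ (hs.trans_lt hx).not_ge (hu ▸ le_iSup u x)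
    simp [level_eq_empty hf₁, level_eq_empty hg₁]

lemma prekopa_leindler_real_of_iSup_ne_top (ha : 0 < a) (hb : 0 < b) (hab : a + b = 1)
    {f g k : ℝ → ℝ≥0∞} (hf : Measurable f) (hg : Measurable g) (hk : Measurable k)
    (hf_top : ⨆ x, f x ≠ ∞) (hg_top : ⨆ x, g x ≠ ∞)
    (h : ∀ x y, f x ^ a * g y ^ b ≤ k (a • x + b • y)) :
    (∫⁻ x, f x) ^ a * (∫⁻ x, g x) ^ b ≤ ∫⁻ x, k x := by
  set M := ⨆ x, f x with hM
  set N := ⨆ x, g x with hN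
  rcases eq_or_ne M 0 with hM₀ | hM₀
  · simp [ENNReal.iSup_eq_zero.1 (hM ▸ hM₀), ha]
  rcases eq_or_ne N 0 with hN₀ | hN₀
  · simp [ENNReal.iSup_eq_zero.1 (hN ▸ hN₀), hb]
  set c := M ^ a * N ^ b
  have hc₀ : c ≠ 0 := by simp [c, hM₀, hN₀, hf_top, hg_top]
  have hc_top : c ≠ ∞ := ENNReal.mul_ne_top (ENNReal.rpow_ne_top_of_nonneg ha.le hf_top)
    (ENNReal.rpow_ne_top_of_nonneg hb.le hg_top)
  have div_rpow_mul (x y : ℝ≥0∞) : (x / M) ^ a * (y / N) ^ b = x ^ a * y ^ b / c := by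
    rw [ENNReal.div_rpow_of_nonneg _ _ ha.le, ENNReal.div_rpow_of_nonneg _ _ hb.le]
    simp only [c, div_eq_mul_inv]
    rw [ENNReal.mul_inv (.inr (ENNReal.rpow_ne_top_of_nonneg hb.le hg_top))
      (.inl (ENNReal.rpow_ne_top_of_nonneg ha.le hf_top))]
    ring
  have normalized := arith_mean_lintegral_le_of_iSup_eq_one ha hb hab (hf.div_const M)
    (hg.div_const N) (hk.div_const c)
    (by rw [← ENNReal.iSup_div, ← hM, ENNReal.div_self hM₀ hf_top])
    (by rw [← ENNReal.iSup_div, ← hN, ENNReal.div_self hN₀ hg_top])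
    fun x y ↦ (div_rpow_mul _ _).trans_le (by gcongr; exact h x y)
  have lintegral_div {u : ℝ → ℝ≥0∞} (hu : Measurable u) (r : ℝ≥0∞) :
      ∫⁻ x, u x / r = (∫⁻ x, u x) / r := by
    simp only [div_eq_mul_inv, lintegral_mul_const _ hu]
  rw [lintegral_div hf, lintegral_div hg, lintegral_div hk] at normalized
  have h_div := (ennreal_geom_mean_le_arith_mean ha hb hab _ _).trans normalized
  rwa [div_rpow_mul, ENNReal.div_le_iff hc₀ hc_top, ENNReal.div_mul_cancel hc₀ hc_top] at h_div

lemma lintegral_eq_iSup_lintegral_min_natCast {α : Type*} [MeasurableSpace α] (μ : Measure α)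
    {f : α → ℝ≥0∞} (hf : Measurable f) : ∫⁻ x, f x ∂μ = ⨆ m : ℕ, ∫⁻ x, min (f x) m ∂μ := by
  rw [← lintegral_iSup (f := fun (m : ℕ) x ↦ min (f x) m) (fun m ↦ by fun_prop)
    fun i j hij x ↦ min_le_min le_rfl (Nat.cast_le.2 hij)]
  simp only [← inf_iSup_eq, ENNReal.iSup_natCast, inf_top_eq]

lemma prekopa_leindler_real (ha : 0 < a) (hb : 0 < b) (hab : a + b = 1)
    {f g k : ℝ → ℝ≥0∞} (hf : Measurable f) (hg : Measurable g) (hk : Measurable k)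
    (h : ∀ x y, f x ^ a * g y ^ b ≤ k (a • x + b • y)) :
    (∫⁻ x, f x) ^ a * (∫⁻ x, g x) ^ b ≤ ∫⁻ x, k x := by
  have rpow_iSup {c : ℝ} (hc : 0 < c) (u : ℕ → ℝ≥0∞) : (⨆ m, u m) ^ c = ⨆ m, u m ^ c :=
    (ENNReal.orderIsoRpow c hc).map_iSup u
  have iSup_min_ne_top (u : ℝ → ℝ≥0∞) (m : ℕ) : ⨆ x, min (u x) m ≠ ∞ :=
    ne_top_of_le_ne_top (ENNReal.natCast_ne_top m) (iSup_le fun x ↦ min_le_right _ _)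
  rw [lintegral_eq_iSup_lintegral_min_natCast _ hf, lintegral_eq_iSup_lintegral_min_natCast _ hg,
    rpow_iSup ha, rpow_iSup hb, ENNReal.iSup_mul]
  refine iSup_le fun i ↦ ?_
  rw [ENNReal.mul_iSup]
  refine iSup_le fun j ↦ prekopa_leindler_real_of_iSup_ne_top ha hb hab (by fun_prop)
    (by fun_prop) hk (iSup_min_ne_top f i) (iSup_min_ne_top g j) fun x y ↦ le_trans ?_ (h x y)
  gcongr <;> exact min_le_left _ _

lemma measurable_finCons (N : ℕ) :
    Measurable fun z : ℝ × (Fin N → ℝ) ↦ (Fin.cons z.1 z.2 : Fin (N + 1) → ℝ) := by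
  refine measurable_pi_iff.2 fun i ↦ ?_
  induction i using Fin.cases with
  | zero => simpa using measurable_fst
  | succ j => simp only [Fin.cons_succ]; fun_prop

lemma lintegral_fin_succ {N : ℕ} {f : (Fin (N + 1) → ℝ) → ℝ≥0∞} (hf : Measurable f) :
    ∫⁻ x, f x = ∫⁻ s : ℝ, ∫⁻ z : Fin N → ℝ, f (Fin.cons s z) := by
  have hsplit := (volume_preserving_piFinSuccAbove (fun _ : Fin (N + 1) ↦ ℝ) 0).symm
  rw [← hsplit.lintegral_comp hf]
  refine (lintegral_prod _ (hf.comp hsplit.measurable).aemeasurable).trans ?_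
  simp [MeasurableEquiv.piFinSuccAbove, Fin.consEquiv]

theorem prekopa_leindler (ha : 0 < a) (hb : 0 < b) (hab : a + b = 1) {N : ℕ}
    {f g k : (Fin N → ℝ) → ℝ≥0∞} (hf : Measurable f) (hg : Measurable g) (hk : Measurable k)
    (h : ∀ x y, f x ^ a * g y ^ b ≤ k (a • x + b • y)) :
    (∫⁻ x, f x) ^ a * (∫⁻ x, g x) ^ b ≤ ∫⁻ x, k x := by
  induction N with
  | zero =>
    have lintegral_eq (u : (Fin 0 → ℝ) → ℝ≥0∞) : ∫⁻ x, u x = u 0 := by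
      rw [lintegral_unique, volume_pi, Measure.pi_univ]
      simp only [Finset.univ_eq_empty, Finset.prod_empty, mul_one]
      exact congrArg u (Subsingleton.elim _ _)
    simpa only [lintegral_eq, smul_zero, add_zero] using h 0 0
  | succ N ih =>
    have measurable_slice {u : (Fin (N + 1) → ℝ) → ℝ≥0∞} (hu : Measurable u) (s : ℝ) :
        Measurable fun z : Fin N → ℝ ↦ u (Fin.cons s z) :=
      hu.comp ((measurable_finCons N).comp measurable_prodMk_left)
    rw [lintegral_fin_succ hf, lintegral_fin_succ hg, lintegral_fin_succ hk]
    refine prekopa_leindler_real ha hb hab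
      (hf.comp (measurable_finCons N)).lintegral_prod_right'
      (hg.comp (measurable_finCons N)).lintegral_prod_right'
      (hk.comp (measurable_finCons N)).lintegral_prod_right' fun s t ↦
      ih (measurable_slice hf s) (measurable_slice hg t) (measurable_slice hk _) fun x y ↦ ?_
    convert h (Fin.cons s x) (Fin.cons t y) using 2
    ext i
    cases i using Fin.cases <;> simp

theorem brunn_minkowski (ha : 0 < a) (hb : 0 < b) (hab : a + b = 1) {N : ℕ}
    {A B C : Set (EuclideanSpace ℝ (Fin N))} (hA : MeasurableSet A) (hB : MeasurableSet B)
    (hC : MeasurableSet C) (h : a • A + b • B ⊆ C) :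
    volume A ^ a * volume B ^ b ≤ volume C := by
  have htoLp := PiLp.volume_preserving_toLp (Fin N)
  have volume_eq {S : Set (EuclideanSpace ℝ (Fin N))} (hS : MeasurableSet S) :
      volume S = ∫⁻ z : Fin N → ℝ, S.indicator 1 (WithLp.toLp 2 z) := by
    rw [← lintegral_indicator_one hS]
    exact (htoLp.lintegral_comp (measurable_one.indicator hS)).symm
  rw [volume_eq hA, volume_eq hB, volume_eq hC]
  refine prekopa_leindler ha hb hab ((measurable_one.indicator hA).comp htoLp.measurable)
    ((measurable_one.indicator hB).comp htoLp.measurable)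
    ((measurable_one.indicator hC).comp htoLp.measurable) fun x y ↦ ?_
  by_cases hx : WithLp.toLp 2 x ∈ A
  · by_cases hy : WithLp.toLp 2 y ∈ B
    · have hxy : WithLp.toLp 2 (a • x + b • y) ∈ C :=
        h (add_mem_add (smul_mem_smul_set hx) (smul_mem_smul_set hy))
      simp only [indicator_of_mem hx, indicator_of_mem hy, indicator_of_mem hxy,
        Pi.one_apply, ENNReal.one_rpow, mul_one, le_refl]
    · simp [hy, hb]
  · simp [hx, ha]

end PrekopaLeindler

section Homogeneous

variable {E F G : Type*} [NormedAddCommGroup E] [NormedSpace ℝ E] [NormedAddCommGroup F]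
  [NormedSpace ℝ F] [NormedAddCommGroup G] [NormedSpace ℝ G] {d e : ℝ} {x : E}

/-- `f` is smooth away from the origin and positively homogeneous of degree `d`. This is how
functions on the unit sphere are differentiated here; nothing is required at the origin. -/
structure SmoothHomogeneous (d : ℝ) (f : E → F) : Prop where
  contDiffOn : ContDiffOn ℝ (⊤ : ℕ∞) f {0}ᶜ
  map_smul : ∀ ⦃s : ℝ⦄ ⦃x : E⦄, 0 < s → x ≠ 0 → f (s • x) = s ^ d • f x

namespace SmoothHomogeneous

lemma contDiffAt {f : E → F} (hf : SmoothHomogeneous d f) (hx : x ≠ 0) :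
    ContDiffAt ℝ (⊤ : ℕ∞) f x :=
  hf.contDiffOn.contDiffAt (isOpen_compl_singleton.mem_nhds hx)

lemma differentiableAt {f : E → F} (hf : SmoothHomogeneous d f) (hx : x ≠ 0) :
    DifferentiableAt ℝ f x :=
  (hf.contDiffAt hx).differentiableAt (by simp)

lemma hasFDerivAt {f : E → F} (hf : SmoothHomogeneous d f) (hx : x ≠ 0) :
    HasFDerivAt f (fderiv ℝ f x) x :=
  (hf.differentiableAt hx).hasFDerivAt

lemma continuous_sphere {f : E → F} (hf : SmoothHomogeneous d f) :
    Continuous fun x : sphere (0 : E) 1 ↦ f x :=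
  hf.contDiffOn.continuousOn.comp_continuous continuous_subtype_val
    fun x ↦ ne_zero_of_mem_unit_sphere x

lemma map_smul_of_degree_zero {f : E → F} (hf : SmoothHomogeneous 0 f) {s : ℝ} (hs : 0 < s)
    (hx : x ≠ 0) : f (s • x) = f x := by
  simpa using hf.map_smul hs hx

lemma of_degree_eq {f : E → F} (hf : SmoothHomogeneous d f) (h : d = e) :
    SmoothHomogeneous e f :=
  h ▸ hf

lemma const (c : F) : SmoothHomogeneous 0 fun _ : E ↦ c where
  contDiffOn := contDiffOn_const
  map_smul := by simp

lemma id : SmoothHomogeneous 1 fun x : E ↦ x where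
  contDiffOn := contDiffOn_id
  map_smul := by simp

lemma add {f g : E → F} (hf : SmoothHomogeneous d f) (hg : SmoothHomogeneous d g) :
    SmoothHomogeneous d fun x ↦ f x + g x where
  contDiffOn := hf.contDiffOn.add hg.contDiffOn
  map_smul s x hs hx := by rw [hf.map_smul hs hx, hg.map_smul hs hx, smul_add]

lemma smul {a : E → ℝ} {f : E → F} (ha : SmoothHomogeneous d a) (hf : SmoothHomogeneous e f) :
    SmoothHomogeneous (d + e) fun x ↦ a x • f x where
  contDiffOn := ha.contDiffOn.smul hf.contDiffOn
  map_smul s x hs hx := by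
    rw [ha.map_smul hs hx, hf.map_smul hs hx, smul_eq_mul, Real.rpow_add hs, smul_smul, smul_smul]
    ring_nf

lemma mul {a b : E → ℝ} (ha : SmoothHomogeneous d a) (hb : SmoothHomogeneous e b) :
    SmoothHomogeneous (d + e) fun x ↦ a x * b x :=
  ha.smul hb

lemma const_smul {f : E → F} (c : ℝ) (hf : SmoothHomogeneous d f) :
    SmoothHomogeneous d fun x ↦ c • f x :=
  ((const c).smul hf).of_degree_eq (zero_add d)

lemma clm_comp {f : E → F} (L : F →L[ℝ] G) (hf : SmoothHomogeneous d f) :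
    SmoothHomogeneous d fun x ↦ L (f x) where
  contDiffOn := L.contDiff.comp_contDiffOn hf.contDiffOn
  map_smul s x hs hx := by rw [hf.map_smul hs hx, _root_.map_smul]

lemma apply {f : E → F →L[ℝ] G} (hf : SmoothHomogeneous d f) (v : F) :
    SmoothHomogeneous d fun x ↦ f x v :=
  hf.clm_comp (ContinuousLinearMap.apply ℝ G v)

lemma norm {V : Type*} [NormedAddCommGroup V] [InnerProductSpace ℝ V] {f : E → V}
    (hf : SmoothHomogeneous d f) (h0 : ∀ x ≠ 0, f x ≠ 0) :
    SmoothHomogeneous d fun x ↦ ‖f x‖ where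
  contDiffOn := hf.contDiffOn.norm ℝ h0
  map_smul s x hs hx := by
    rw [hf.map_smul hs hx, norm_smul, Real.norm_of_nonneg (by positivity), smul_eq_mul]

lemma inner {V : Type*} [NormedAddCommGroup V] [InnerProductSpace ℝ V] {f g : E → V}
    (hf : SmoothHomogeneous d f) (hg : SmoothHomogeneous e g) :
    SmoothHomogeneous (d + e) fun x ↦ ⟪f x, g x⟫ where
  contDiffOn := hf.contDiffOn.inner ℝ hg.contDiffOn
  map_smul s x hs hx := by
    rw [hf.map_smul hs hx, hg.map_smul hs hx, real_inner_smul_left, real_inner_smul_right,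
      Real.rpow_add hs, smul_eq_mul, mul_assoc]

lemma rpow {f : E → ℝ} (hf : SmoothHomogeneous d f) (hpos : ∀ x ≠ 0, 0 < f x) (a : ℝ) :
    SmoothHomogeneous (d * a) fun x ↦ f x ^ a where
  contDiffOn := hf.contDiffOn.rpow_const_of_ne fun x hx ↦ (hpos x hx).ne'
  map_smul s x hs hx := by
    rw [hf.map_smul hs hx, smul_eq_mul, smul_eq_mul,
      Real.mul_rpow (by positivity) (hpos x hx).le, Real.rpow_mul hs.le]

lemma div {f g : E → ℝ} (hf : SmoothHomogeneous d f) (hg : SmoothHomogeneous e g)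
    (h0 : ∀ x ≠ 0, g x ≠ 0) : SmoothHomogeneous (d - e) fun x ↦ f x / g x where
  contDiffOn := hf.contDiffOn.div hg.contDiffOn h0
  map_smul s x hs hx := by
    rw [hf.map_smul hs hx, hg.map_smul hs hx, smul_eq_mul, smul_eq_mul, smul_eq_mul,
      Real.rpow_sub hs, mul_div_mul_comm]

lemma fderiv {f : E → F} (hf : SmoothHomogeneous d f) :
    SmoothHomogeneous (d - 1) (fderiv ℝ f) where
  contDiffOn := hf.contDiffOn.fderiv_of_isOpen isOpen_compl_singleton (by simp)
  map_smul s x hs hx := by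
    have h_eq : (fun y ↦ f (s • y)) =ᶠ[nhds x] fun y ↦ s ^ d • f y := by
      filter_upwards [isOpen_compl_singleton.mem_nhds hx] with y hy using hf.map_smul hs hy
    have h_deriv : s • _root_.fderiv ℝ f (s • x) = s ^ d • _root_.fderiv ℝ f x := by
      rw [← fderiv_comp_smul, h_eq.fderiv_eq, fderiv_fun_const_smul (hf.differentiableAt hx)]
    rw [Real.rpow_sub_one hs.ne', div_eq_inv_mul, mul_smul, ← h_deriv, inv_smul_smul₀ hs.ne']

lemma fderiv_apply_self {f : E → F} (hf : SmoothHomogeneous d f) (hx : x ≠ 0) :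
    _root_.fderiv ℝ f x x = d • f x := by
  have h_ray : HasDerivAt (fun s : ℝ ↦ f (s • x)) (_root_.fderiv ℝ f x x) 1 := by
    have hs : HasDerivAt (fun s : ℝ ↦ s • x) x 1 := by
      simpa using (hasDerivAt_id (1 : ℝ)).smul_const x
    exact HasFDerivAt.comp_hasDerivAt 1 (by simpa using hf.hasFDerivAt hx) hs
  have h_pow : HasDerivAt (fun s : ℝ ↦ s ^ d • f x) (d • f x) 1 := by
    simpa using ((Real.hasDerivAt_rpow_const (p := d) (Or.inl one_ne_zero)).smul_const (f x))
  refine h_ray.unique (h_pow.congr_of_eventuallyEq ?_)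
  filter_upwards [lt_mem_nhds one_pos] with s hs using hf.map_smul hs hx

lemma gradient {V : Type*} [NormedAddCommGroup V] [InnerProductSpace ℝ V] [CompleteSpace V]
    {f : V → ℝ} (hf : SmoothHomogeneous d f) : SmoothHomogeneous (d - 1) (gradient f) :=
  hf.fderiv.clm_comp
    (InnerProductSpace.toDual ℝ V).symm.toContinuousLinearEquiv.toContinuousLinearMap

end SmoothHomogeneous

end Homogeneous

section Polar

open Set
open scoped ENNReal

variable {n : ℕ}

instance : IsFiniteMeasure (sphMeasure n) := by
  unfold sphMeasure; infer_instance

instance : (sphMeasure n).IsOpenPosMeasure := by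
  unfold sphMeasure; infer_instance

lemma exists_pos_smul_sphere {E : Type*} [NormedAddCommGroup E] [NormedSpace ℝ E] {y : E}
    (hy : y ≠ 0) : ∃ s : ℝ, 0 < s ∧ ∃ x : sphere (0 : E) 1, s • (x : E) = y := by
  have h_norm : ‖y‖ ≠ 0 := norm_ne_zero_iff.2 hy
  refine ⟨‖y‖, norm_pos_iff.2 hy, ⟨‖y‖⁻¹ • y, ?_⟩, smul_inv_smul₀ h_norm y⟩
  simp [norm_smul, h_norm]

lemma integrable_of_continuous {X F : Type*} [TopologicalSpace X] [T2Space X] [CompactSpace X]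
    [MeasurableSpace X] [OpensMeasurableSpace X] {μ : Measure X} [IsFiniteMeasure μ]
    [NormedAddCommGroup F] [SecondCountableTopologyEither X F] {f : X → F}
    (hf : Continuous f) : Integrable f μ := by
  simpa using hf.continuousOn.integrableOn_compact (μ := μ) isCompact_univ

lemma measurePreserving_sphere_prod :
    MeasurePreserving (homeomorphUnitSphereProd (Euc n)) (volume.comap Subtype.val)
      ((sphMeasure n).prod (Measure.volumeIoiPow n)) := by
  have h_dim : Module.finrank ℝ (Euc n) - 1 = n := by simp
  simpa only [h_dim, sphMeasure] using
    (volume : Measure (Euc n)).measurePreserving_homeomorphUnitSphereProd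

lemma lintegral_eq_lintegral_sphere_prod (g : Euc n → ℝ≥0∞) :
    ∫⁻ y, g y = ∫⁻ p : sphere (0 : Euc n) 1 × Ioi (0 : ℝ), g ((p.2 : ℝ) • (p.1 : Euc n))
      ∂(sphMeasure n).prod (Measure.volumeIoiPow n) := by
  have h_compl := lintegral_subtype_comap (μ := volume)
    (measurableSet_singleton (0 : Euc n)).compl g
  rw [restrict_compl_singleton] at h_compl
  rw [← h_compl,
    ← measurePreserving_sphere_prod.lintegral_comp_emb (Homeomorph.measurableEmbedding _)]
  refine lintegral_congr fun y ↦ ?_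
  have hy : (y : Euc n) ≠ 0 := y.2
  simp [smul_smul, hy]

lemma volumeIoiPow_Iic (k : ℕ) (x : Ioi (0 : ℝ)) :
    Measure.volumeIoiPow k (Iic x) = ENNReal.ofReal (x ^ (k + 1) / (k + 1)) := by
  have h_atom : Measure.volumeIoiPow k {x} = 0 :=
    withDensity_absolutelyContinuous _ _ (by
      rw [comap_subtype_coe_apply measurableSet_Ioi]; simp)
  rw [← Measure.volumeIoiPow_apply_Iio, measure_congr (Iio_ae_eq_Iic' h_atom)]

lemma SmoothHomogeneous.measurableSet_norm_le {d : ℝ} {ρ : Euc n → ℝ}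
    (hρ : SmoothHomogeneous d ρ) : MeasurableSet {y | y ≠ 0 ∧ ‖y‖ ≤ ρ y} := by
  have h_open := (hρ.contDiffOn.continuousOn.sub continuousOn_id.norm).isOpen_inter_preimage
    isOpen_compl_singleton (isOpen_Iio (a := (0 : ℝ)))
  convert (measurableSet_singleton (0 : Euc n)).compl.diff h_open.measurableSet using 1
  ext y
  simp +contextual

lemma setLIntegral_norm_le_eq_lintegral_sphere {ρ : Euc n → ℝ} (hρ : SmoothHomogeneous 0 ρ)
    (hρ_pos : ∀ x ≠ 0, 0 < ρ x) {c : Euc n → ℝ≥0∞}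
    (hc : ∀ ⦃s : ℝ⦄ ⦃x : Euc n⦄, 0 < s → x ≠ 0 → c (s • x) = c x)
    (hc_meas : Measurable fun x : sphere (0 : Euc n) 1 ↦ c x) :
    ∫⁻ y in {y | y ≠ 0 ∧ ‖y‖ ≤ ρ y}, c y =
      ∫⁻ x : sphere (0 : Euc n) 1, c x * ENNReal.ofReal (ρ x ^ (n + 1) / (n + 1))
        ∂sphMeasure n := by
  let T : Set (sphere (0 : Euc n) 1 × Ioi (0 : ℝ)) := {p | (p.2 : ℝ) ≤ ρ p.1}
  have hT : MeasurableSet T :=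
    measurableSet_le (by fun_prop) (hρ.continuous_sphere.measurable.comp measurable_fst)
  have h_polar (p : sphere (0 : Euc n) 1 × Ioi (0 : ℝ)) :
      indicator {y | y ≠ 0 ∧ ‖y‖ ≤ ρ y} c ((p.2 : ℝ) • (p.1 : Euc n)) =
        c p.1 * T.indicator 1 p := by
    obtain ⟨x, s, hs : 0 < s⟩ := p
    have hx := ne_zero_of_mem_unit_sphere x
    simp [indicator_apply, T, hρ.map_smul_of_degree_zero hs hx, hc hs hx, norm_smul, hs.ne', hx,
      abs_of_pos hs]
  rw [← lintegral_indicator hρ.measurableSet_norm_le, lintegral_eq_lintegral_sphere_prod]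
  simp only [h_polar]
  rw [lintegral_prod (fun p : sphere (0 : Euc n) 1 × Ioi (0 : ℝ) ↦ c p.1 * T.indicator 1 p)
    ((hc_meas.comp measurable_fst).mul (measurable_one.indicator hT)).aemeasurable]
  refine lintegral_congr fun x ↦ ?_
  have hx := ne_zero_of_mem_unit_sphere x
  have h_slice : Measurable fun s ↦ T.indicator (fun _ ↦ (1 : ℝ≥0∞)) (x, s) :=
    (measurable_one.indicator hT).comp measurable_prodMk_left
  refine (lintegral_const_mul (c x) h_slice).trans ?_
  rw [← volumeIoiPow_Iic n ⟨ρ x, hρ_pos x hx⟩, ← lintegral_indicator_one measurableSet_Iic]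
  rfl

lemma integral_volumeIoiPow (k : ℕ) (φ : ℝ → ℝ) :
    ∫ s : Ioi (0 : ℝ), φ s ∂Measure.volumeIoiPow k = ∫ s in Ioi (0 : ℝ), s ^ k * φ s := by
  simp only [Measure.volumeIoiPow, ENNReal.ofReal]
  rw [integral_withDensity_eq_integral_smul (by fun_prop),
    integral_subtype_comap measurableSet_Ioi fun s ↦ Real.toNNReal (s ^ k) • φ s]
  refine setIntegral_congr_fun measurableSet_Ioi fun s (hs : 0 < s) ↦ ?_
  rw [NNReal.smul_def, Real.coe_toNNReal _ (by positivity), smul_eq_mul]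

lemma integral_norm_mul_of_homogeneous {d : ℝ} (φ : ℝ → ℝ) {b : Euc n → ℝ}
    (hb : SmoothHomogeneous d b) :
    ∫ y, φ ‖y‖ * b y =
      (∫ s in Ioi (0 : ℝ), s ^ n * (s ^ d * φ s)) * ∫ x, b x.1 ∂sphMeasure n := by
  have h_compl := integral_subtype_comap (μ := volume)
    (measurableSet_singleton (0 : Euc n)).compl fun y ↦ φ ‖y‖ * b y
  rw [restrict_compl_singleton] at h_compl
  rw [← integral_volumeIoiPow n fun s ↦ s ^ d * φ s, mul_comm, ← integral_prod_mul, ← h_compl,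
    ← measurePreserving_sphere_prod.integral_comp (Homeomorph.measurableEmbedding _)]
  refine integral_congr_ae (.of_forall fun y ↦ ?_)
  have hy : (y : Euc n) ≠ 0 := y.2
  have hy_pos : 0 < ‖(y : Euc n)‖ := norm_pos_iff.2 hy
  have h_scale := hb.map_smul (inv_pos.2 hy_pos) hy
  simp only [homeomorphUnitSphereProd_apply_fst_coe, homeomorphUnitSphereProd_apply_snd_coe,
    h_scale, smul_eq_mul, Real.inv_rpow hy_pos.le]
  field_simp

end Polar

section Divergence

open Set

variable {n : ℕ} {d : ℝ}

section CompactSupport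

variable {E : Type*} [NormedAddCommGroup E] [NormedSpace ℝ E] [MeasurableSpace E]
  [BorelSpace E] {μ : Measure E} {f : E → ℝ}

lemma integrable_fderiv_apply_of_hasCompactSupport [IsFiniteMeasureOnCompacts μ]
    (hf : ContDiff ℝ 1 f) (hf_supp : HasCompactSupport f) (v : E) :
    Integrable (fun y ↦ fderiv ℝ f y v) μ :=
  ((hf.continuous_fderiv one_ne_zero).clm_apply
    continuous_const).integrable_of_hasCompactSupport (hf_supp.fderiv_apply (𝕜 := ℝ) v)

lemma integral_fderiv_apply_eq_zero [FiniteDimensional ℝ E] [μ.IsAddHaarMeasure]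
    (hf : ContDiff ℝ 1 f) (hf_supp : HasCompactSupport f) (v : E) : ∫ y, fderiv ℝ f y v ∂μ = 0 := by
  have h_parts := integral_mul_fderiv_eq_neg_fderiv_mul_of_integrable (𝕜 := ℝ) (μ := μ)
    (f := fun _ ↦ (1 : ℝ)) (g := f) (v := v) (by simp)
    (by simpa using integrable_fderiv_apply_of_hasCompactSupport hf hf_supp v)
    (by simpa using hf.continuous.integrable_of_hasCompactSupport hf_supp)
    (fun x _ ↦ differentiableAt_const _) fun x _ ↦ hf.differentiable one_ne_zero x
  simpa using h_parts

end CompactSupport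

lemma hasFDerivAt_norm {E : Type*} [NormedAddCommGroup E] [InnerProductSpace ℝ E] {y : E}
    (hy : y ≠ 0) : HasFDerivAt (fun y : E ↦ ‖y‖) (‖y‖⁻¹ • innerSL ℝ y) y := by
  have hy_norm : ‖y‖ ≠ 0 := norm_ne_zero_iff.2 hy
  have h_sqrt := (hasStrictFDerivAt_norm_sq y).hasFDerivAt.sqrt (by positivity)
  simp only [Real.sqrt_sq (norm_nonneg _)] at h_sqrt
  refine h_sqrt.congr_fderiv ?_
  rw [← Nat.cast_smul_eq_nsmul ℝ, smul_smul]
  congr 1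
  field_simp
  norm_num

/-- A smooth bump supported in the radial interval `[1, 3]`. Composed with the norm it localises
homogeneous functions away from their singularity at the origin. -/
def annulusBump : ContDiffBump (2 : ℝ) := ⟨1 / 2, 1, by norm_num, by norm_num⟩

lemma annulusBump_eq_zero_of_le_one {s : ℝ} (hs : s ≤ 1) : annulusBump s = 0 :=
  annulusBump.zero_of_le_dist (by
    change 1 ≤ dist s 2
    rw [Real.dist_eq, abs_sub_comm]
    exact le_abs.2 (.inl (by linarith)))

lemma annulusBump_eq_zero_of_three_le {s : ℝ} (hs : 3 ≤ s) : annulusBump s = 0 :=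
  annulusBump.zero_of_le_dist (by
    change 1 ≤ dist s 2
    rw [Real.dist_eq]
    exact le_abs.2 (.inl (by linarith)))

lemma contDiff_annulusBump_norm_mul {f : Euc n → ℝ} (hf : SmoothHomogeneous d f) :
    ContDiff ℝ (⊤ : ℕ∞) fun y ↦ annulusBump ‖y‖ * f y := by
  rw [contDiff_iff_contDiffAt]
  intro y
  obtain rfl | hy := eq_or_ne y 0
  · refine (contDiffAt_const (c := (0 : ℝ))).congr_of_eventuallyEq ?_
    filter_upwards [ball_mem_nhds (0 : Euc n) one_pos] with z hz
    rw [annulusBump_eq_zero_of_le_one (mem_ball_zero_iff.1 hz).le, zero_mul]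
  · exact (annulusBump.contDiff.contDiffAt.comp y (contDiffAt_norm ℝ hy)).mul (hf.contDiffAt hy)

lemma hasCompactSupport_annulusBump_norm_mul (f : Euc n → ℝ) :
    HasCompactSupport fun y ↦ annulusBump ‖y‖ * f y := by
  refine HasCompactSupport.of_support_subset_isCompact (isCompact_closedBall 0 3) fun y hy ↦ ?_
  by_contra h_out
  rw [mem_closedBall_zero_iff, not_le] at h_out
  exact hy (by simp [annulusBump_eq_zero_of_three_le h_out.le])

lemma integrable_annulusBump_norm_mul {f : Euc n → ℝ} (hf : SmoothHomogeneous d f) :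
    Integrable fun y ↦ annulusBump ‖y‖ * f y :=
  (contDiff_annulusBump_norm_mul hf).continuous.integrable_of_hasCompactSupport
    (hasCompactSupport_annulusBump_norm_mul f)

lemma smoothHomogeneous_norm_rpow (a : ℝ) : SmoothHomogeneous a fun y : Euc n ↦ ‖y‖ ^ a :=
  ((SmoothHomogeneous.id.norm fun _ ↦ id).rpow (fun _ ↦ norm_pos_iff.2) a).of_degree_eq (one_mul a)

lemma integral_rpow_mul_annulusBump_ne_zero (n : ℕ) (d : ℝ) :
    ∫ s in Ioi (0 : ℝ), s ^ n * (s ^ d * annulusBump s) ≠ 0 := by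
  have h_pos : 0 < ∫ y : Euc n, annulusBump ‖y‖ * ‖y‖ ^ d := by
    have h_two : ‖EuclideanSpace.single (0 : Fin (n + 1)) (2 : ℝ)‖ = 2 := by simp
    have h_bump : annulusBump 2 = 1 :=
      annulusBump.one_of_mem_closedBall (mem_closedBall_self annulusBump.rIn_pos.le)
    refine (contDiff_annulusBump_norm_mul
      (smoothHomogeneous_norm_rpow d)).continuous.integral_pos_of_hasCompactSupport_nonneg_nonzero
      (x := EuclideanSpace.single 0 2) (hasCompactSupport_annulusBump_norm_mul _)
      (fun y ↦ mul_nonneg annulusBump.nonneg (by positivity)) ?_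
    rw [h_two, h_bump]
    positivity
  rw [integral_norm_mul_of_homogeneous annulusBump (smoothHomogeneous_norm_rpow d)] at h_pos
  exact left_ne_zero_of_mul h_pos.ne'

lemma integral_deriv_annulusBump (n : ℕ) :
    ∫ s in Ioi (0 : ℝ), s ^ n * (s ^ (-n : ℝ) * deriv annulusBump s) = 0 := by
  have h_cancel : ∫ s in Ioi (0 : ℝ), s ^ n * (s ^ (-n : ℝ) * deriv annulusBump s) =
      ∫ s in Ioi (0 : ℝ), deriv annulusBump s :=
    setIntegral_congr_fun measurableSet_Ioi fun s (hs : 0 < s) ↦ by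
      simp only [Real.rpow_neg hs.le, Real.rpow_natCast]
      field_simp
  rw [h_cancel, HasCompactSupport.integral_Ioi_deriv_eq annulusBump.contDiff
    annulusBump.hasCompactSupport, annulusBump_eq_zero_of_le_one zero_le_one, neg_zero]

lemma fderiv_annulusBump_norm_mul_apply {f : Euc n → ℝ} (hf : SmoothHomogeneous d f)
    {y : Euc n} (hy : y ≠ 0) (v : Euc n) :
    fderiv ℝ (fun y ↦ annulusBump ‖y‖ * f y) y v =
      deriv annulusBump ‖y‖ * (‖y‖ ^ (-1 : ℝ) * (⟪y, v⟫ * f y)) +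
        annulusBump ‖y‖ * fderiv ℝ f y v := by
  have h_bump : HasDerivAt annulusBump (deriv annulusBump ‖y‖) ‖y‖ :=
    (annulusBump.contDiff (n := 1)).differentiable one_ne_zero |>.differentiableAt.hasDerivAt
  have h_prod := ((h_bump.comp_hasFDerivAt y (hasFDerivAt_norm hy)).mul (hf.hasFDerivAt hy)).fderiv
  refine (DFunLike.congr_fun h_prod v).trans ?_
  simp only [Function.comp_apply, _root_.add_apply, _root_.smul_apply, smul_eq_mul,
    coe_innerSL_apply, Real.rpow_neg_one]
  ring

-- Degree `-n` is critical: the radial factor of the boundary term is `∫ φ' = 0`.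
lemma integral_sphere_fderiv_apply_of_degree_neg {f : Euc n → ℝ}
    (hf : SmoothHomogeneous (-n) f) (v : Euc n) :
    ∫ x, fderiv ℝ f x.1 v ∂sphMeasure n = 0 := by
  have hf_deriv := hf.fderiv.apply v
  have h_radial : SmoothHomogeneous (-n) fun y ↦ ‖y‖ ^ (-1 : ℝ) * (⟪y, v⟫ * f y) :=
    ((smoothHomogeneous_norm_rpow (-1)).mul
      ((SmoothHomogeneous.id.inner (SmoothHomogeneous.const v)).mul hf)).of_degree_eq (by ring)
  have h_smooth : ContDiff ℝ 1 fun y ↦ annulusBump ‖y‖ * f y :=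
    (contDiff_annulusBump_norm_mul hf).of_le (by simp)
  have h_supp := hasCompactSupport_annulusBump_norm_mul f
  have h_boundary : ∫ y, (fderiv ℝ (fun y ↦ annulusBump ‖y‖ * f y) y v -
      annulusBump ‖y‖ * fderiv ℝ f y v) = 0 := by
    calc
      _ = ∫ y, deriv annulusBump ‖y‖ * (‖y‖ ^ (-1 : ℝ) * (⟪y, v⟫ * f y)) := by
        refine integral_congr_ae ?_
        filter_upwards [compl_mem_ae_iff.2 (measure_singleton (0 : Euc n))] with y hy
        rw [fderiv_annulusBump_norm_mul_apply hf hy, add_sub_cancel_right]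
      _ = 0 := by
        rw [integral_norm_mul_of_homogeneous _ h_radial, integral_deriv_annulusBump, zero_mul]
  rw [integral_sub (integrable_fderiv_apply_of_hasCompactSupport h_smooth h_supp v)
    (integrable_annulusBump_norm_mul hf_deriv), integral_fderiv_apply_eq_zero h_smooth h_supp,
    zero_sub, neg_eq_zero, integral_norm_mul_of_homogeneous _ hf_deriv] at h_boundary
  exact (mul_eq_zero.1 h_boundary).resolve_left (integral_rpow_mul_annulusBump_ne_zero n _)

lemma integral_sphere_fderiv_apply {f : Euc n → ℝ} (hf : SmoothHomogeneous d f) (v : Euc n) :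
    ∫ x, fderiv ℝ f x.1 v ∂sphMeasure n = (d + n) * ∫ x, f x.1 * ⟪x.1, v⟫ ∂sphMeasure n := by
  set a : ℝ := -(d + n) with ha
  have h_norm := smoothHomogeneous_norm_rpow (n := n) a
  have h_crit := integral_sphere_fderiv_apply_of_degree_neg
    ((h_norm.mul hf).of_degree_eq (by rw [ha]; ring)) v
  have h_deriv (x : sphere (0 : Euc n) 1) :
      fderiv ℝ (fun y ↦ ‖y‖ ^ a * f y) x v = fderiv ℝ f x v - (d + n) * (f x * ⟪x.1, v⟫) := by
    have hx := ne_zero_of_mem_unit_sphere x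
    have h_prod := (((hasFDerivAt_norm hx).rpow_const (p := a)
      (Or.inl (norm_ne_zero_iff.2 hx))).mul (hf.hasFDerivAt hx)).fderiv
    refine (DFunLike.congr_fun h_prod v).trans ?_
    simp only [norm_eq_of_mem_sphere, ha, neg_add_rev, Real.one_rpow, one_smul, mul_one, inv_one,
      _root_.add_apply, _root_.smul_apply, coe_innerSL_apply, smul_eq_mul]
    ring
  simp only [h_deriv] at h_crit
  rw [integral_sub, integral_const_mul] at h_crit
  · linarith
  · exact integrable_of_continuous (hf.fderiv.apply v).continuous_sphere
  · exact (integrable_of_continuous (hf.mul (SmoothHomogeneous.id.inner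
      (SmoothHomogeneous.const v))).continuous_sphere).const_mul _

lemma integral_sphere_gradient {f : Euc n → ℝ} (hf : SmoothHomogeneous d f) :
    ∫ x, gradient f x.1 ∂sphMeasure n = (d + n) • ∫ x, f x.1 • x.1 ∂sphMeasure n := by
  refine ext_inner_left ℝ fun v ↦ ?_
  rw [real_inner_smul_right, ← integral_inner, ← integral_inner]
  · simpa only [← real_inner_comm v, inner_gradient_left, real_inner_smul_left]
      using integral_sphere_fderiv_apply hf v
  · exact integrable_of_continuous (hf.smul SmoothHomogeneous.id).continuous_sphere
  · exact integrable_of_continuous hf.gradient.continuous_sphere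

/-- The divergence `∑ᵢ ∂ᵢFᵢ` of a vector field on Euclidean space. -/
def divergence (F : Euc n → Euc n) (x : Euc n) : ℝ :=
  ∑ i, fderiv ℝ F x (EuclideanSpace.single i 1) i

lemma integral_sphere_divergence {F : Euc n → Euc n} (hF : SmoothHomogeneous d F) :
    ∫ x, divergence F x.1 ∂sphMeasure n = (d + n) * ∫ x, ⟪F x.1, x.1⟫ ∂sphMeasure n := by
  have h_coord (i : Fin (n + 1)) : SmoothHomogeneous d fun x ↦ F x i :=
    hF.clm_comp (EuclideanSpace.proj i)
  have h_fderiv (i : Fin (n + 1)) (x : sphere (0 : Euc n) 1) (v : Euc n) :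
      fderiv ℝ F x v i = fderiv ℝ (fun y ↦ F y i) x v := by
    have h_proj := ((EuclideanSpace.proj (𝕜 := ℝ) i).hasFDerivAt.comp x.1
      (hF.hasFDerivAt (ne_zero_of_mem_unit_sphere x))).fderiv
    exact (DFunLike.congr_fun h_proj v).symm
  simp only [divergence, h_fderiv, PiLp.inner_apply]
  rw [integral_finsetSum _ fun i _ ↦
      integrable_of_continuous ((h_coord i).fderiv.apply _).continuous_sphere,
    integral_finsetSum _ fun i _ ↦ ?_, Finset.mul_sum]
  · refine Finset.sum_congr rfl fun i _ ↦ ?_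
    rw [integral_sphere_fderiv_apply (h_coord i)]
    simp [EuclideanSpace.inner_single_right, mul_comm]
  · exact integrable_of_continuous ((h_coord i).inner
      (SmoothHomogeneous.id.clm_comp (EuclideanSpace.proj i))).continuous_sphere

end Divergence

section Hessian

variable {n : ℕ} {d e : ℝ} {u w : Euc n → ℝ} {x : Euc n}

lemma gradient_apply (u : Euc n → ℝ) (x : Euc n) (i : Fin (n + 1)) :
    gradient u x i = fderiv ℝ u x (EuclideanSpace.single i 1) := by
  rw [← inner_gradient_left, EuclideanSpace.inner_single_right]
  simp

/-- The Hessian of `u` as an endomorphism, the derivative of the gradient. Its matrix is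
`ehess n u x`. -/
def hess (u : Euc n → ℝ) (x : Euc n) : Euc n →L[ℝ] Euc n := fderiv ℝ (gradient u) x

lemma inner_hess (hu : SmoothHomogeneous d u) (hx : x ≠ 0) (v w : Euc n) :
    ⟪hess u x v, w⟫ = fderiv ℝ (fderiv ℝ u) x v w := by
  have h_grad : HasFDerivAt (gradient u) _ x :=
    (InnerProductSpace.toDual ℝ (Euc n)).symm.toContinuousLinearEquiv.hasFDerivAt.comp x
      (hu.fderiv.hasFDerivAt hx)
  rw [hess, h_grad.fderiv]
  simp

lemma inner_hess_comm (hu : SmoothHomogeneous d u) (hx : x ≠ 0) (v w : Euc n) :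
    ⟪hess u x v, w⟫ = ⟪v, hess u x w⟫ := by
  rw [← real_inner_comm v, inner_hess hu hx, inner_hess hu hx]
  have h_two : ContDiffAt ℝ 2 u x :=
    (hu.contDiffAt hx).of_le (WithTop.coe_le_coe.2 (le_top : (2 : ℕ∞) ≤ ⊤))
  exact h_two.isSymmSndFDerivAt (by simp) v w

lemma hess_self (hu : SmoothHomogeneous 1 u) (hx : x ≠ 0) : hess u x x = 0 := by
  simpa [hess] using hu.gradient.fderiv_apply_self hx

lemma ehess_apply (hu : SmoothHomogeneous d u) (hx : x ≠ 0) (i j : Fin (n + 1)) :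
    ehess n u x i j = hess u x (EuclideanSpace.single i 1) j := by
  have h_proj : (fun y ↦ fderiv ℝ u y (EuclideanSpace.single j 1)) =
      EuclideanSpace.proj (𝕜 := ℝ) j ∘ gradient u := funext fun y ↦ (gradient_apply u y j).symm
  have h_coord := ((EuclideanSpace.proj (𝕜 := ℝ) j).hasFDerivAt.comp x
    (hu.gradient.hasFDerivAt hx)).fderiv
  rw [ehess, Matrix.of_apply, h_proj, h_coord]
  rfl

lemma ehess_comm (hu : SmoothHomogeneous d u) (hx : x ≠ 0) (i j : Fin (n + 1)) :
    ehess n u x i j = ehess n u x j i := by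
  have h_symm := inner_hess_comm hu hx (EuclideanSpace.single i 1) (EuclideanSpace.single j 1)
  rw [EuclideanSpace.inner_single_right, EuclideanSpace.inner_single_left] at h_symm
  simpa [ehess_apply hu hx] using h_symm

lemma ehess_mulVec (hu : SmoothHomogeneous d u) (hx : x ≠ 0) (v : Euc n) :
    ehess n u x *ᵥ v.ofLp = (hess u x v).ofLp := by
  ext i
  have h_single : ⟪hess u x v, EuclideanSpace.single i 1⟫ = hess u x v i := by
    simp [EuclideanSpace.inner_single_right]
  rw [← h_single, inner_hess_comm hu hx, PiLp.inner_apply, Matrix.mulVec, dotProduct]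
  refine Finset.sum_congr rfl fun j _ ↦ ?_
  rw [ehess_apply hu hx]
  simp

lemma bmat_mulVec (hu : SmoothHomogeneous d u) (hx : x ≠ 0) (v : Euc n) :
    bmat n u x *ᵥ v.ofLp = (hess u x v + (u x * ⟪x, v⟫) • x).ofLp := by
  rw [bmat, Matrix.add_mulVec, ehess_mulVec hu hx]
  ext i
  simp only [Pi.add_apply, PiLp.add_apply, PiLp.smul_apply, smul_eq_mul, Matrix.mulVec, dotProduct,
    Matrix.of_apply, PiLp.inner_apply, Finset.mul_sum, Finset.sum_mul, RCLike.inner_apply,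
    conj_trivial]
  congr 1
  exact Finset.sum_congr rfl fun j _ ↦ by ring

lemma dotProduct_bmat_mulVec (hu : SmoothHomogeneous d u) (hx : x ≠ 0) (v : Euc n) :
    v.ofLp ⬝ᵥ (bmat n u x *ᵥ v.ofLp) = ⟪hess u x v, v⟫ + u x * ⟪x, v⟫ ^ 2 := by
  have h_inner (y : Euc n) : v.ofLp ⬝ᵥ y.ofLp = ⟪y, v⟫ := by
    simp [EuclideanSpace.inner_eq_star_dotProduct]
  rw [bmat_mulVec hu hx, h_inner, inner_add_left, real_inner_smul_left]
  ring

lemma bmat_isHermitian (hu : SmoothHomogeneous d u) (hx : x ≠ 0) : (bmat n u x).IsHermitian := by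
  ext i j
  simp [bmat, ehess_comm hu hx i j, mul_comm]

lemma continuous_bmat (hu : SmoothHomogeneous d u) :
    Continuous fun x : sphere (0 : Euc n) 1 ↦ bmat n u x := by
  refine continuous_matrix fun i j ↦ ?_
  have h_hess := ((hu.gradient.fderiv.apply (EuclideanSpace.single i 1)).clm_comp
    (EuclideanSpace.proj (𝕜 := ℝ) j)).continuous_sphere
  have h_coord (k : Fin (n + 1)) : Continuous fun x : sphere (0 : Euc n) 1 ↦ x.1 k := by fun_prop
  refine (h_hess.add (hu.continuous_sphere.mul ((h_coord i).mul (h_coord j)))).congr fun x ↦ ?_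
  rw [bmat, Matrix.add_apply, ehess_apply hu (ne_zero_of_mem_unit_sphere x)]
  rfl

lemma ehess_mul (hu : SmoothHomogeneous d u) (hw : SmoothHomogeneous e w) (hx : x ≠ 0) :
    ehess n (fun y ↦ u y * w y) x = u x • ehess n w x + w x • ehess n u x +
      (vecMulVec (gradient u x).ofLp (gradient w x).ofLp +
        vecMulVec (gradient w x).ofLp (gradient u x).ofLp) := by
  ext i j
  have h_deriv (v : Euc n) : (fun y ↦ fderiv ℝ (fun y ↦ u y * w y) y v)
      =ᶠ[nhds x] fun y ↦ u y * fderiv ℝ w y v + w y * fderiv ℝ u y v := by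
    filter_upwards [isOpen_compl_singleton.mem_nhds hx] with y hy
    rw [fderiv_fun_mul (hu.differentiableAt hy) (hw.differentiableAt hy)]
    simp
  have h_second (v : Euc n) :=
    (((hu.hasFDerivAt hx).fun_mul ((hw.fderiv.apply v).hasFDerivAt hx)).fun_add
      ((hw.hasFDerivAt hx).fun_mul ((hu.fderiv.apply v).hasFDerivAt hx))).fderiv
  simp only [ehess, of_apply, (h_deriv _).fderiv_eq, h_second, Matrix.add_apply,
    Matrix.smul_apply, vecMulVec_apply, gradient_apply, _root_.add_apply, _root_.smul_apply,
    smul_eq_mul]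
  ring

lemma bmat_add_const_smul (hu : SmoothHomogeneous d u) (hw : SmoothHomogeneous d w) (t : ℝ)
    (hx : x ≠ 0) : bmat n (fun y ↦ u y + t * w y) x = bmat n u x + t • bmat n w x := by
  have h_deriv (v : Euc n) : (fun y ↦ fderiv ℝ (fun y ↦ u y + t * w y) y v)
      =ᶠ[nhds x] fun y ↦ fderiv ℝ u y v + t * fderiv ℝ w y v := by
    filter_upwards [isOpen_compl_singleton.mem_nhds hx] with y hy
    rw [fderiv_fun_add (hu.differentiableAt hy) ((hw.differentiableAt hy).const_mul t),
      fderiv_const_mul (hw.differentiableAt hy)]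
    simp
  ext i j
  have h_second (v : Euc n) := (((hu.fderiv.apply v).hasFDerivAt hx).fun_add
    (((hw.fderiv.apply v).hasFDerivAt hx).const_mul t)).fderiv
  simp only [bmat, ehess, Matrix.add_apply, Matrix.smul_apply, of_apply,
    (h_deriv _).fderiv_eq, h_second, _root_.add_apply, _root_.smul_apply, smul_eq_mul]
  ring

lemma bmat_mul_mul_self {f : Euc n → ℝ} (hf : SmoothHomogeneous 0 f)
    (hu : SmoothHomogeneous 1 u) (hx : x ≠ 0) :
    bmat n (fun y ↦ f y * (f y * u y)) x = (2 * f x) • bmat n (fun y ↦ f y * u y) x -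
      f x ^ 2 • bmat n u x +
      (2 * u x) • vecMulVec (gradient f x).ofLp (gradient f x).ofLp := by
  have h_grad : gradient (fun y ↦ f y * u y) x = f x • gradient u x + u x • gradient f x := by
    rw [gradient, fderiv_fun_mul (hf.differentiableAt hx) (hu.differentiableAt hx)]
    simp [gradient]
  rw [bmat, bmat, bmat, ehess_mul hf (hf.mul hu) hx, ehess_mul hf hu hx, h_grad]
  ext i j
  simp only [smul_add, WithLp.ofLp_add, WithLp.ofLp_smul, Matrix.add_apply, Matrix.smul_apply,
    smul_eq_mul, vecMulVec_apply, Pi.add_apply, Pi.smul_apply, of_apply, smul_of, Matrix.sub_apply]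
  ring

end Hessian

section SupportFunction

open scoped Pointwise

variable {n : ℕ} {H w v : Euc n → ℝ} {x y : Euc n}

/-- `H` is the `1`-homogeneous support function of a smooth convex body with positive curvature
and the origin in its interior. -/
structure IsSmoothSupportFunction (H : Euc n → ℝ) : Prop extends SmoothHomogeneous 1 H where
  pos_sphere : ∀ x : sphere (0 : Euc n) 1, 0 < H x
  posDef : ∀ x : sphere (0 : Euc n) 1, (bmat n H x).PosDef

/-- The Wulff shape of `H`; it is the convex body with support function `H` when `H` is convex. -/
def wulffShape (H : Euc n → ℝ) : Set (Euc n) := {y | ∀ x ≠ 0, ⟪x, y⟫ ≤ H x}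

/-- The `1`-homogeneous extension of the inverse Gauss map `x ↦ ∇H(x)` from the sphere to the
boundary of the body with support function `H`. -/
def conicInverseGauss (H : Euc n → ℝ) (y : Euc n) : Euc n := ‖y‖ • gradient H y

/-- `(n + 1)` times the volume of the body with support function `H`. -/
def coneVolume (H : Euc n → ℝ) : ℝ := ∫ x : sphere (0 : Euc n) 1, (bmat n H x).det ∂sphMeasure n

lemma measurableSet_wulffShape (H : Euc n → ℝ) : MeasurableSet (wulffShape H) := by
  have h_inter : wulffShape H = ⋂ x ≠ 0, {y | ⟪x, y⟫ ≤ H x} := by ext y; simp [wulffShape]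
  rw [h_inter]
  exact (isClosed_biInter fun x _ ↦
    isClosed_le (by fun_prop) continuous_const).measurableSet

lemma smul_wulffShape_add_subset {a b : ℝ} (ha : 0 ≤ a) (hb : 0 ≤ b) :
    a • wulffShape w + b • wulffShape v ⊆ wulffShape fun x ↦ a * w x + b * v x := by
  rintro _ ⟨_, ⟨y, hy, rfl⟩, _, ⟨z, hz, rfl⟩, rfl⟩ x hx
  simp only [inner_add_right, real_inner_smul_right]
  exact add_le_add (mul_le_mul_of_nonneg_left (hy x hx) ha) (mul_le_mul_of_nonneg_left (hz x hx) hb)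

namespace SmoothHomogeneous

lemma inner_gradient_self (hH : SmoothHomogeneous 1 H) (hx : x ≠ 0) :
    ⟪_root_.gradient H x, x⟫ = H x := by
  rw [inner_gradient_left, hH.fderiv_apply_self hx, one_smul]

lemma gradient_smul (hH : SmoothHomogeneous 1 H) {s : ℝ} (hs : 0 < s) (hx : x ≠ 0) :
    _root_.gradient H (s • x) = _root_.gradient H x :=
  (hH.gradient.of_degree_eq (sub_self 1)).map_smul_of_degree_zero hs hx

lemma map_smul_of_degree_one (hH : SmoothHomogeneous 1 H) {s : ℝ} (hs : 0 < s) (hx : x ≠ 0) :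
    H (s • x) = s * H x := by
  simpa using hH.map_smul hs hx

lemma hess_smul (hH : SmoothHomogeneous 1 H) {s : ℝ} (hs : 0 < s) (hx : x ≠ 0) :
    hess H (s • x) = s⁻¹ • hess H x := by
  rw [hess, hH.gradient.fderiv.map_smul hs hx, sub_self, zero_sub, Real.rpow_neg_one, hess]

lemma conicInverseGauss (hH : SmoothHomogeneous 1 H) :
    SmoothHomogeneous 1 (conicInverseGauss H) :=
  ((SmoothHomogeneous.id.norm fun _ hx ↦ hx).smul hH.gradient).of_degree_eq (by norm_num)

lemma conicInverseGauss_smul_sphere (hH : SmoothHomogeneous 1 H) {s : ℝ} (hs : 0 < s)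
    (x : sphere (0 : Euc n) 1) :
    _root_.conicInverseGauss H (s • x.1) = s • _root_.gradient H x.1 := by
  rw [_root_.conicInverseGauss, hH.gradient_smul hs (ne_zero_of_mem_unit_sphere x), norm_smul,
    norm_eq_of_mem_sphere, mul_one, Real.norm_of_nonneg hs.le]

lemma fderiv_conicInverseGauss_apply (hH : SmoothHomogeneous 1 H) (x : sphere (0 : Euc n) 1)
    (z : Euc n) : _root_.fderiv ℝ (_root_.conicInverseGauss H) x z =
      hess H x z + ⟪x.1, z⟫ • _root_.gradient H x.1 := by
  have hx := ne_zero_of_mem_unit_sphere x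
  have h_prod := ((hasFDerivAt_norm hx).smul (hH.gradient.hasFDerivAt hx)).fderiv
  refine (DFunLike.congr_fun h_prod z).trans ?_
  simp [hess]

-- The matrix `bmat` differs from this derivative by a transvection.
lemma det_fderiv_conicInverseGauss (hH : SmoothHomogeneous 1 H) (x : sphere (0 : Euc n) 1)
    (h0 : H x ≠ 0) : (_root_.fderiv ℝ (_root_.conicInverseGauss H) x).det = (bmat n H x).det := by
  have hx := ne_zero_of_mem_unit_sphere x
  set shear : Euc n := (H x)⁻¹ • _root_.gradient H x.1 - x.1
  have h_orth : ⟪x.1, shear⟫ = 0 := by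
    rw [inner_sub_right, real_inner_smul_right, real_inner_comm, hH.inner_gradient_self hx,
      real_inner_self_eq_norm_sq, norm_eq_of_mem_sphere, inv_mul_cancel₀ h0, one_pow, sub_self]
  have h_factor : (_root_.fderiv ℝ (_root_.conicInverseGauss H) x : Euc n →ₗ[ℝ] Euc n) =
      LinearMap.transvection (innerSL ℝ x.1 : Euc n →ₗ[ℝ] ℝ) shear ∘ₗ
        (bmat n H x).toEuclideanLin := by
    ext1 z
    have h_radial : ⟪x.1, hess H x z⟫ = 0 := by
      rw [← inner_hess_comm hH hx, hess_self hH hx, inner_zero_left]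
    have h_bmat : (bmat n H x).toEuclideanLin z = hess H x z + (H x * ⟪x.1, z⟫) • x.1 :=
      WithLp.ofLp_injective 2 (bmat_mulVec hH hx z)
    rw [LinearMap.comp_apply, h_bmat, LinearMap.transvection.apply]
    simp only [ContinuousLinearMap.coe_coe, innerSL_apply_apply, inner_add_right, h_radial,
      real_inner_smul_right, real_inner_self_eq_norm_sq, norm_eq_of_mem_sphere, shear,
      fderiv_conicInverseGauss_apply hH]
    match_scalars <;> field_simp <;> ring
  rw [ContinuousLinearMap.det, h_factor, LinearMap.det_comp, LinearMap.transvection.det,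
    LinearMap.det_toLpLin]
  simp [h_orth]

end SmoothHomogeneous

namespace IsSmoothSupportFunction

lemma pos (hH : IsSmoothSupportFunction H) (hx : x ≠ 0) : 0 < H x := by
  obtain ⟨s, hs, z, rfl⟩ := exists_pos_smul_sphere hx
  rw [hH.map_smul_of_degree_one hs (ne_zero_of_mem_unit_sphere z)]
  exact mul_pos hs (hH.pos_sphere z)

lemma gradient_ne_zero (hH : IsSmoothSupportFunction H) (hx : x ≠ 0) : gradient H x ≠ 0 := by
  intro h_grad
  have h_euler := hH.inner_gradient_self hx
  rw [h_grad, inner_zero_left] at h_euler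
  exact (hH.pos hx).ne h_euler

lemma det_pos (hH : IsSmoothSupportFunction H) (x : sphere (0 : Euc n) 1) :
    0 < (bmat n H x).det :=
  (hH.posDef x).det_pos

lemma inner_hess_pos (hH : IsSmoothSupportFunction H) {z : Euc n}
    (hxz : LinearIndependent ℝ ![x, z]) : 0 < ⟪hess H x z, z⟫ := by
  have hx : x ≠ 0 := hxz.ne_zero 0
  obtain ⟨s, hs, y, rfl⟩ := exists_pos_smul_sphere hx
  have hy := ne_zero_of_mem_unit_sphere y
  set t : Euc n := z - ⟪y.1, z⟫ • y.1 with ht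
  have ht_ne : t ≠ 0 := fun h ↦ by
    have h_pair := LinearIndependent.pair_iff.1 hxz ⟪y.1, z⟫ (-s) (by
      rw [smul_comm, ← sub_eq_zero.1 h, neg_smul, add_neg_cancel])
    exact hs.ne' (neg_eq_zero.1 h_pair.2)
  have h_orth : ⟪y.1, t⟫ = 0 := by
    rw [ht, inner_sub_right, real_inner_smul_right, real_inner_self_eq_norm_sq,
      norm_eq_of_mem_sphere, one_pow, mul_one, sub_self]
  have h_hess : hess H y t = hess H y z := by
    rw [ht, map_sub, map_smul, hess_self hH.toSmoothHomogeneous hy, smul_zero, sub_zero]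
  have h_tangent : ⟪hess H y z, t⟫ = ⟪hess H y z, z⟫ := by
    rw [inner_hess_comm hH.toSmoothHomogeneous hy, h_hess, real_inner_comm]
  have h_pos := (hH.posDef y).dotProduct_mulVec_pos (x := t.ofLp) (by simpa using ht_ne)
  rw [star_trivial, dotProduct_bmat_mulVec hH.toSmoothHomogeneous hy, h_orth, h_hess,
    h_tangent] at h_pos
  rw [hH.hess_smul hs hy, _root_.smul_apply, real_inner_smul_left]
  exact mul_pos (inv_pos.2 hs) (by simpa using h_pos)

lemma add_inner_gradient_lt (hH : IsSmoothSupportFunction H) {z : Euc n}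
    (hxz : LinearIndependent ℝ ![x, z]) : H x + ⟪gradient H x, z⟫ < H (x + z) := by
  have h_indep (t : ℝ) : LinearIndependent ℝ ![x + t • z, z] :=
    (LinearIndependent.pair_add_smul_left_iff t).2 hxz
  have h_ne (t : ℝ) : x + t • z ≠ 0 := (h_indep t).ne_zero 0
  have h_line (t : ℝ) : HasDerivAt (fun t : ℝ ↦ x + t • z) z t := by
    simpa using ((hasDerivAt_id t).smul_const z).const_add x
  have h_first (t : ℝ) : HasDerivAt (fun t ↦ H (x + t • z)) ⟪gradient H (x + t • z), z⟫ t := by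
    rw [inner_gradient_left]
    exact (hH.hasFDerivAt (h_ne t)).comp_hasDerivAt t (h_line t)
  have h_second (t : ℝ) : HasDerivAt (fun t ↦ ⟪gradient H (x + t • z), z⟫)
      ⟪hess H (x + t • z) z, z⟫ t := by
    simpa [hess] using ((hH.gradient.hasFDerivAt (h_ne t)).comp_hasDerivAt t (h_line t)).inner ℝ
      (hasDerivAt_const t z)
  have h_mono : StrictMono fun t : ℝ ↦ ⟪gradient H (x + t • z), z⟫ :=
    strictMono_of_hasDerivAt_pos h_second fun t ↦ hH.inner_hess_pos (h_indep t)
  obtain ⟨ξ, hξ, h_slope⟩ := exists_hasDerivAt_eq_slope _ _ (zero_lt_one (α := ℝ))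
    (fun t _ ↦ (h_first t).continuousAt.continuousWithinAt) fun t _ ↦ h_first t
  have h_lt := h_mono hξ.1
  simp only [h_slope, zero_smul, add_zero, one_smul, sub_zero, div_one] at h_lt
  linarith

lemma inner_gradient_lt (hH : IsSmoothSupportFunction H) (hx : x ≠ 0) (hy : y ≠ 0)
    (hxy : ¬ SameRay ℝ x y) : ⟪gradient H x, y⟫ < H y := by
  by_cases h_indep : LinearIndependent ℝ ![x, y]
  · have h_lt := hH.add_inner_gradient_lt (x := x) (z := y - x) (by
      simpa [sub_eq_add_neg, add_comm] using
        (LinearIndependent.pair_add_smul_right_iff (-1 : ℝ)).2 h_indep)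
    rw [inner_sub_right, hH.inner_gradient_self hx, add_sub_cancel, add_sub_cancel] at h_lt
    exact h_lt
  · have h_ray := (sameRay_or_sameRay_neg_iff_not_linearIndependent.2 h_indep).resolve_left hxy
    obtain ⟨s, hs, hs_eq⟩ := h_ray.exists_pos_left hx (neg_ne_zero.2 hy)
    rw [← neg_neg y, ← hs_eq, inner_neg_right, real_inner_smul_right, hH.inner_gradient_self hx,
      hs_eq, neg_neg]
    linarith [mul_pos hs (hH.pos hx), hH.pos hy]

lemma gradient_mem_wulffShape (hH : IsSmoothSupportFunction H) (hx : x ≠ 0) :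
    gradient H x ∈ wulffShape H := by
  intro y hy
  rw [real_inner_comm]
  by_cases hxy : SameRay ℝ x y
  · obtain ⟨s, hs, rfl⟩ := hxy.exists_pos_left hx hy
    rw [real_inner_smul_right, hH.inner_gradient_self hx, hH.map_smul_of_degree_one hs hx]
  · exact (hH.inner_gradient_lt hx hy hxy).le

lemma injOn_conicInverseGauss (hH : IsSmoothSupportFunction H) :
    Set.InjOn (conicInverseGauss H) {0}ᶜ := by
  intro y (hy : y ≠ 0) z (hz : z ≠ 0) h_eq
  have norm_lt {y z : Euc n} (hy : y ≠ 0) (hz : z ≠ 0) (hyz : ¬ SameRay ℝ y z)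
      (h_eq : conicInverseGauss H y = conicInverseGauss H z) : ‖z‖ < ‖y‖ := by
    have h_inner := congrArg (⟪·, z⟫) h_eq
    simp only [conicInverseGauss, real_inner_smul_left, hH.inner_gradient_self hz] at h_inner
    refine lt_of_mul_lt_mul_right (a := H z) ?_ (hH.pos hz).le
    rw [← h_inner]
    exact mul_lt_mul_of_pos_left (hH.inner_gradient_lt hy hz hyz) (norm_pos_iff.2 hy)
  by_cases hyz : SameRay ℝ y z
  · refine (sameRay_iff_of_norm_eq ?_).1 hyz
    obtain ⟨s, hs, rfl⟩ := hyz.exists_pos_right hy hz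
    simp only [conicInverseGauss, hH.gradient_smul hs hz] at h_eq
    exact smul_left_injective ℝ (hH.gradient_ne_zero hz) h_eq
  · exact ((norm_lt hy hz hyz h_eq).asymm
      (norm_lt hz hy (fun h ↦ hyz h.symm) h_eq.symm)).elim

lemma exists_eq_smul_gradient (hH : IsSmoothSupportFunction H) (hy : y ≠ 0) :
    ∃ s : ℝ, 0 < s ∧ ∃ x : sphere (0 : Euc n) 1, y = s • gradient H x.1 := by
  obtain ⟨r, hr, z, hz⟩ := exists_pos_smul_sphere hy
  have h_cont : Continuous fun x : sphere (0 : Euc n) 1 ↦ ⟪x.1, y⟫ / H x :=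
    Continuous.div (by fun_prop) hH.continuous_sphere fun x ↦ (hH.pos_sphere x).ne'
  obtain ⟨x, -, hx_max⟩ := isCompact_univ.exists_isMaxOn ⟨z, Set.mem_univ z⟩ h_cont.continuousOn
  have hx := ne_zero_of_mem_unit_sphere x
  set s := ⟪x.1, y⟫ / H x with hs
  have h_zero : ⟪x.1, y⟫ - s * H x = 0 := by
    rw [hs, div_mul_cancel₀ _ (hH.pos_sphere x).ne', sub_self]
  have hs_pos : 0 < s := by
    refine lt_of_lt_of_le (div_pos ?_ (hH.pos_sphere z)) (hx_max (Set.mem_univ z))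
    rw [← hz, real_inner_smul_right, real_inner_self_eq_norm_sq, norm_eq_of_mem_sphere]
    positivity
  have h_max : IsLocalMax (fun z ↦ ⟪z, y⟫ - s * H z) x.1 := by
    filter_upwards [isOpen_compl_singleton.mem_nhds hx] with t ht
    obtain ⟨c, hc, z, rfl⟩ := exists_pos_smul_sphere ht
    have h_le := (div_le_iff₀ (hH.pos_sphere z)).1 (hx_max (Set.mem_univ z))
    rw [h_zero, hH.map_smul_of_degree_one hc (ne_zero_of_mem_unit_sphere z), real_inner_smul_left,
      mul_left_comm, ← mul_sub]
    exact mul_nonpos_of_nonneg_of_nonpos hc.le (sub_nonpos.2 h_le)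
  have h_deriv : HasFDerivAt (fun z ↦ ⟪z, y⟫ - s * H z) (innerSL ℝ y - s • fderiv ℝ H x) x.1 := by
    simpa only [real_inner_comm, innerSL_apply_apply] using
      (innerSL ℝ y).hasFDerivAt.fun_sub ((hH.hasFDerivAt hx).const_mul s)
  refine ⟨s, hs_pos, x, ext_inner_right ℝ fun v ↦ ?_⟩
  rw [real_inner_smul_left, inner_gradient_left, ← sub_eq_zero]
  simpa using DFunLike.congr_fun (h_max.hasFDerivAt_eq_zero h_deriv) v

lemma setLIntegral_abs_det_fderiv_conicInverseGauss (hH : IsSmoothSupportFunction H)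
    {ρ : Euc n → ℝ} (hρ : SmoothHomogeneous 0 ρ) (hρ_pos : ∀ x ≠ 0, 0 < ρ x) :
    ∫⁻ y in {y | y ≠ 0 ∧ ‖y‖ ≤ ρ y}, ENNReal.ofReal |(fderiv ℝ (conicInverseGauss H) y).det| =
      ENNReal.ofReal ((∫ x : sphere (0 : Euc n) 1, (bmat n H x).det * ρ x ^ (n + 1)
        ∂sphMeasure n) / (n + 1)) := by
  have h_hom := hH.conicInverseGauss.fderiv.of_degree_eq (sub_self 1)
  have h_det (x : sphere (0 : Euc n) 1) :
      |(fderiv ℝ (conicInverseGauss H) x).det| = (bmat n H x).det := by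
    rw [hH.det_fderiv_conicInverseGauss x (hH.pos_sphere x).ne', abs_of_pos (hH.det_pos x)]
  have h_cont := (continuous_bmat hH.toSmoothHomogeneous).matrix_det
  rw [setLIntegral_norm_le_eq_lintegral_sphere hρ hρ_pos
    (fun s x hs hx ↦ by rw [h_hom.map_smul_of_degree_zero hs hx])
    (by simpa only [h_det] using h_cont.measurable.ennreal_ofReal), ← integral_div,
    ofReal_integral_eq_lintegral_ofReal]
  · refine lintegral_congr fun x ↦ ?_
    rw [h_det, ← ENNReal.ofReal_mul (hH.det_pos x).le, mul_div_assoc]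
  · exact integrable_of_continuous ((h_cont.mul (hρ.continuous_sphere.pow _)).div_const _)
  · refine Filter.Eventually.of_forall fun x ↦ ?_
    have := hH.det_pos x
    have := hρ_pos x (ne_zero_of_mem_unit_sphere x)
    positivity

lemma ofReal_coneVolume_div_le_volume (hH : IsSmoothSupportFunction H) :
    ENNReal.ofReal (coneVolume H / (n + 1)) ≤ volume (wulffShape H) := by
  have h_one := SmoothHomogeneous.const (E := Euc n) (1 : ℝ)
  have h_area := hH.setLIntegral_abs_det_fderiv_conicInverseGauss h_one fun _ _ ↦ one_pos
  rw [lintegral_abs_det_fderiv_eq_addHaar_image volume h_one.measurableSet_norm_le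
    (fun y hy ↦ (hH.conicInverseGauss.hasFDerivAt hy.1).hasFDerivWithinAt)
    (hH.injOn_conicInverseGauss.mono fun y hy ↦ hy.1)] at h_area
  simp only [one_pow, mul_one] at h_area
  rw [coneVolume, ← h_area]
  refine measure_mono ?_
  rintro _ ⟨y, ⟨hy, hy_norm⟩, rfl⟩ x hx
  rw [conicInverseGauss, real_inner_smul_right]
  calc ‖y‖ * ⟪x, gradient H y⟫ ≤ ‖y‖ * H x :=
        mul_le_mul_of_nonneg_left (hH.gradient_mem_wulffShape hy x hx) (norm_nonneg y)
    _ ≤ H x := mul_le_of_le_one_left (hH.pos hx).le hy_norm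

lemma wulffShape_sdiff_subset_image (hH : IsSmoothSupportFunction H) (hw : SmoothHomogeneous 1 w) :
    wulffShape w \ {0} ⊆ conicInverseGauss H '' {y | y ≠ 0 ∧ ‖y‖ ≤ w y / H y} := by
  rintro y ⟨hy_mem, hy⟩
  obtain ⟨s, hs, x, rfl⟩ := hH.exists_eq_smul_gradient hy
  have hx := ne_zero_of_mem_unit_sphere x
  refine ⟨s • x.1, ⟨smul_ne_zero hs.ne' hx, ?_⟩, hH.conicInverseGauss_smul_sphere hs x⟩
  have h_le := hy_mem x hx
  rw [real_inner_smul_right, real_inner_comm, hH.inner_gradient_self hx] at h_le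
  rw [hw.map_smul_of_degree_one hs hx, hH.map_smul_of_degree_one hs hx, norm_smul,
    norm_eq_of_mem_sphere, mul_one, Real.norm_of_nonneg hs.le, mul_div_mul_left _ _ hs.ne']
  exact (le_div_iff₀ (hH.pos hx)).2 h_le

lemma volume_wulffShape_le (hH : IsSmoothSupportFunction H) (hw : SmoothHomogeneous 1 w)
    (hw_pos : ∀ x ≠ 0, 0 < w x) :
    volume (wulffShape w) ≤ ENNReal.ofReal ((∫ x : sphere (0 : Euc n) 1,
      (bmat n H x).det * (w x / H x) ^ (n + 1) ∂sphMeasure n) / (n + 1)) := by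
  have h_quot : SmoothHomogeneous 0 fun x ↦ w x / H x :=
    (hw.div hH.toSmoothHomogeneous fun x hx ↦ (hH.pos hx).ne').of_degree_eq (sub_self 1)
  rw [← hH.setLIntegral_abs_det_fderiv_conicInverseGauss h_quot
    fun x hx ↦ div_pos (hw_pos x hx) (hH.pos hx)]
  calc volume (wulffShape w) = volume (wulffShape w \ {0}) :=
        (measure_sdiff_null (measure_singleton 0)).symm
    _ ≤ volume (conicInverseGauss H '' {y | y ≠ 0 ∧ ‖y‖ ≤ w y / H y}) :=
        measure_mono (hH.wulffShape_sdiff_subset_image hw)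
    _ ≤ _ := addHaar_image_le_lintegral_abs_det_fderiv volume h_quot.measurableSet_norm_le
        fun y hy ↦ (hH.conicInverseGauss.hasFDerivAt hy.1).hasFDerivWithinAt

lemma coneVolume_nonneg (hH : IsSmoothSupportFunction H) : 0 ≤ coneVolume H :=
  integral_nonneg fun x ↦ (hH.det_pos x).le

lemma coneVolume_le_integral (hH : IsSmoothSupportFunction H) (hw : IsSmoothSupportFunction w) :
    coneVolume w ≤ ∫ x : sphere (0 : Euc n) 1,
      (bmat n H x).det * (w x / H x) ^ (n + 1) ∂sphMeasure n := by
  have h_vol := hw.ofReal_coneVolume_div_le_volume.trans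
    (hH.volume_wulffShape_le hw.toSmoothHomogeneous fun _ ↦ hw.pos)
  have h_nonneg : 0 ≤ ∫ x : sphere (0 : Euc n) 1,
      (bmat n H x).det * (w x / H x) ^ (n + 1) ∂sphMeasure n :=
    integral_nonneg fun x ↦ mul_nonneg (hH.det_pos x).le
      (pow_nonneg (div_nonneg (hw.pos_sphere x).le (hH.pos_sphere x).le) _)
  rw [ENNReal.ofReal_le_ofReal_iff (by positivity)] at h_vol
  exact (div_le_div_iff_of_pos_right (by positivity)).1 h_vol

lemma volume_wulffShape (hH : IsSmoothSupportFunction H) :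
    volume (wulffShape H) = ENNReal.ofReal (coneVolume H / (n + 1)) := by
  refine le_antisymm ?_ hH.ofReal_coneVolume_div_le_volume
  have h_le := hH.volume_wulffShape_le hH.toSmoothHomogeneous fun _ ↦ hH.pos
  simpa [coneVolume, div_self (hH.pos_sphere _).ne'] using h_le

theorem coneVolume_mul_le_sq (hw : IsSmoothSupportFunction w) (hv : IsSmoothSupportFunction v)
    (hmid : IsSmoothSupportFunction fun x ↦ 1 / 2 * w x + 1 / 2 * v x) :
    coneVolume w * coneVolume v ≤ coneVolume (fun x ↦ 1 / 2 * w x + 1 / 2 * v x) ^ 2 := by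
  have h_bm := brunn_minkowski (one_half_pos (α := ℝ)) one_half_pos (add_halves 1)
    (measurableSet_wulffShape w) (measurableSet_wulffShape v)
    (measurableSet_wulffShape fun x ↦ 1 / 2 * w x + 1 / 2 * v x)
    (smul_wulffShape_add_subset one_half_pos.le one_half_pos.le)
  have h_sq (a : ENNReal) : (a ^ (1 / 2 : ℝ)) ^ 2 = a := by
    rw [← ENNReal.rpow_natCast, ← ENNReal.rpow_mul]
    norm_num
  have h_le := pow_le_pow_left' h_bm 2
  have hw_nonneg := hw.coneVolume_nonneg
  have hv_nonneg := hv.coneVolume_nonneg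
  have hmid_nonneg := hmid.coneVolume_nonneg
  rw [mul_pow, h_sq, h_sq, hw.volume_wulffShape, hv.volume_wulffShape, hmid.volume_wulffShape,
    ← ENNReal.ofReal_mul (by positivity), ← ENNReal.ofReal_pow (by positivity),
    ENNReal.ofReal_le_ofReal_iff (by positivity), div_mul_div_comm, div_pow, ← pow_two] at h_le
  exact (div_le_div_iff_of_pos_right (by positivity)).1 h_le

end IsSmoothSupportFunction

end SupportFunction

section Variation

theorem hasDerivAt_det_add_smul {m : Type*} [Fintype m] [DecidableEq m] (A B : Matrix m m ℝ)
    (t : ℝ) : HasDerivAt (fun s : ℝ ↦ (A + s • B).det) ((A + t • B).adjugate * B).trace t := by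
  let detRows : ContinuousMultilinearMap ℝ (fun _ : m ↦ m → ℝ) ℝ :=
    { detRowAlternating.toMultilinearMap with cont := continuous_id.matrix_det }
  have h_line : HasDerivAt (fun s : ℝ ↦ A.row + s • B.row) B.row t := by
    simpa using ((hasDerivAt_id t).smul_const B.row).const_add A.row
  have h_rows (C : Matrix m m ℝ) : detRows.linearDeriv C.row B.row = (C.adjugate * B).trace := by
    rw [ContinuousMultilinearMap.linearDeriv_apply, Matrix.trace_mul_comm]
    refine Finset.sum_congr rfl fun i _ ↦ (cramer_transpose_apply C (B.row i) i).symm.trans ?_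
    rw [cramer_eq_adjugate_mulVec, ← adjugate_transpose, mulVec_transpose]
    rfl
  rw [← h_rows]
  exact (detRows.hasFDerivAt (A + t • B)).comp_hasDerivAt t h_line

lemma hasDerivAt_integral_of_continuousOn {X : Type*} [TopologicalSpace X] [T2Space X]
    [CompactSpace X] [MeasurableSpace X] [OpensMeasurableSpace X] {μ : Measure X}
    [IsFiniteMeasure μ] {g g' : ℝ → X → ℝ} {t₀ : ℝ} {s : Set ℝ} (hs : s ∈ nhds t₀)
    (hg : ContinuousOn (fun z : ℝ × X ↦ g z.1 z.2) (s ×ˢ Set.univ))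
    (hg' : ContinuousOn (fun z : ℝ × X ↦ g' z.1 z.2) (s ×ˢ Set.univ))
    (h_deriv : ∀ t ∈ s, ∀ x, HasDerivAt (fun t ↦ g t x) (g' t x) t) :
    HasDerivAt (fun t ↦ ∫ x, g t x ∂μ) (∫ x, g' t₀ x ∂μ) t₀ := by
  obtain ⟨k, hk_nhds, hks, hk⟩ := local_compact_nhds hs
  obtain ⟨C, hC⟩ := (hk.prod isCompact_univ).exists_bound_of_continuousOn
    (hg'.mono (Set.prod_mono_left hks))
  have h_slice {f : ℝ → X → ℝ} (hf : ContinuousOn (fun z : ℝ × X ↦ f z.1 z.2) (s ×ˢ Set.univ))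
      {t : ℝ} (ht : t ∈ s) : Integrable (f t) μ :=
    integrable_of_continuous (hf.comp_continuous (f := fun x ↦ (t, x)) (by fun_prop)
      fun _ ↦ ⟨ht, Set.mem_univ _⟩)
  exact (hasDerivAt_integral_of_dominated_loc_of_deriv_le (bound := fun _ ↦ C) hk_nhds
    (by filter_upwards [hs] with t ht using (h_slice hg ht).aestronglyMeasurable)
    (h_slice hg (mem_of_mem_nhds hs)) (h_slice hg' (mem_of_mem_nhds hs)).aestronglyMeasurable
    (.of_forall fun x t ht ↦ hC (t, x) ⟨ht, Set.mem_univ _⟩) (integrable_const C)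
    (.of_forall fun x t ht ↦ h_deriv t (hks ht) x)).2

lemma eventually_forall_pos_of_continuous {T X : Type*} [TopologicalSpace T] [TopologicalSpace X]
    [CompactSpace X] {f : T × X → ℝ} {t₀ : T} (hf : Continuous f) (h_pos : ∀ x, 0 < f (t₀, x)) :
    ∀ᶠ t in nhds t₀, ∀ x, 0 < f (t, x) := by
  simpa using isCompact_univ.eventually_forall_of_forall_eventually (P := fun t x ↦ 0 < f (t, x))
    fun x _ ↦ hf.continuousAt.eventually_const_lt (h_pos x)

lemma nonpos_of_isLocalMax_of_hasDerivAt {φ φ' : ℝ → ℝ} {a c : ℝ} (h_max : IsLocalMax φ a)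
    (hφ : ∀ᶠ t in nhds a, HasDerivAt φ (φ' t) t) (hφ' : HasDerivAt φ' c a) : c ≤ 0 := by
  by_contra! hc
  have h_deriv : deriv φ =ᶠ[nhds a] φ' := by filter_upwards [hφ] with t ht using ht.deriv
  have h_deriv2 : deriv (deriv φ) a = c := by rw [h_deriv.deriv_eq, hφ'.deriv]
  have h_min : IsLocalMin φ a := isLocalMin_of_deriv_deriv_pos (h_deriv2 ▸ hc)
    h_max.deriv_eq_zero hφ.self_of_nhds.continuousAt
  have h_const : φ =ᶠ[nhds a] fun _ ↦ φ a := by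
    filter_upwards [h_max, h_min] with t h_le h_ge using le_antisymm h_le h_ge
  have h_zero : deriv (deriv φ) a = 0 := by simp [h_const.deriv.deriv_eq]
  exact hc.ne' (h_deriv2 ▸ h_zero)

lemma mul_le_sq_of_eventually_mul_neg_le_sq {P P' : ℝ → ℝ} {c : ℝ}
    (hP : ∀ᶠ t in nhds 0, HasDerivAt P (P' t) t) (hP' : HasDerivAt P' c 0)
    (h_le : ∀ᶠ t in nhds 0, P t * P (-t) ≤ P 0 ^ 2) : c * P 0 ≤ P' 0 ^ 2 := by
  have hP_neg := (continuous_neg.tendsto' (0 : ℝ) 0 neg_zero).eventually hP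
  have h_reflect {f : ℝ → ℝ} {f' t : ℝ} (hf : HasDerivAt f f' (-t)) :
      HasDerivAt (fun t ↦ f (-t)) (-f') t := by
    simpa [Function.comp_def] using hf.comp t (hasDerivAt_neg t)
  have hP0 := hP.self_of_nhds
  have h_max : IsLocalMax (fun t ↦ P t * P (-t)) 0 := by
    filter_upwards [h_le] with t ht
    simpa [pow_two] using ht
  have h_nonpos := nonpos_of_isLocalMax_of_hasDerivAt h_max
    (φ' := fun t ↦ P' t * P (-t) + P t * -P' (-t))
    (by filter_upwards [hP, hP_neg] with t ht ht_neg
        using ht.fun_mul (h_reflect ht_neg))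
    ((hP'.fun_mul (h_reflect (by simpa using hP0))).fun_add
      (hP0.fun_mul (h_reflect (by simpa using hP')).fun_neg))
  simp only [neg_zero] at h_nonpos
  linarith

variable {n : ℕ} {H u : Euc n → ℝ}

namespace SmoothHomogeneous

lemma add_const_mul {d : ℝ} (hH : SmoothHomogeneous d H) (hu : SmoothHomogeneous d u) (t : ℝ) :
    SmoothHomogeneous d fun y ↦ H y + t * u y :=
  hH.add (hu.const_smul t)

lemma continuous_bmat_add_smul (hH : SmoothHomogeneous 1 H) (hu : SmoothHomogeneous 1 u) :
    Continuous fun z : ℝ × sphere (0 : Euc n) 1 ↦ bmat n H z.2 + z.1 • bmat n u z.2 :=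
  ((continuous_bmat hH).comp continuous_snd).add
    (continuous_fst.smul ((continuous_bmat hu).comp continuous_snd))

lemma continuous_trace_adjugate_mul (hH : SmoothHomogeneous 1 H) (hu : SmoothHomogeneous 1 u) :
    Continuous fun z : ℝ × sphere (0 : Euc n) 1 ↦
      ((bmat n H z.2 + z.1 • bmat n u z.2).adjugate * bmat n u z.2).trace :=
  ((hH.continuous_bmat_add_smul hu).matrix_adjugate.matrix_mul
    ((continuous_bmat hu).comp continuous_snd)).matrix_trace

lemma hasDerivAt_coneVolume (hH : SmoothHomogeneous 1 H) (hu : SmoothHomogeneous 1 u) (t : ℝ) :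
    HasDerivAt (fun t ↦ coneVolume fun y ↦ H y + t * u y)
      (∫ x : sphere (0 : Euc n) 1,
        ((bmat n (fun y ↦ H y + t * u y) x).adjugate * bmat n u x).trace ∂sphMeasure n) t := by
  have h_bmat (t : ℝ) (x : sphere (0 : Euc n) 1) :=
    bmat_add_const_smul hH hu t (ne_zero_of_mem_unit_sphere x)
  simp only [coneVolume, h_bmat]
  have h_deriv := hasDerivAt_integral_of_continuousOn (μ := sphMeasure n) (t₀ := t)
    Filter.univ_mem (hH.continuous_bmat_add_smul hu).matrix_det.continuousOn
    (hH.continuous_trace_adjugate_mul hu).continuousOn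
    fun t _ x ↦ hasDerivAt_det_add_smul (bmat n H x) (bmat n u x) t
  exact h_deriv

end SmoothHomogeneous

namespace IsSmoothSupportFunction

lemma coneVolume_pos (hH : IsSmoothSupportFunction H) : 0 < coneVolume H :=
  (continuous_bmat hH.toSmoothHomogeneous).matrix_det
    |>.integral_pos_of_hasCompactSupport_nonneg_nonzero (HasCompactSupport.of_compactSpace _)
      (fun x ↦ (hH.det_pos x).le) (x := ⟨EuclideanSpace.single 0 1, by simp⟩) (hH.det_pos _).ne'

lemma eventually_add_const_mul_pos (hH : IsSmoothSupportFunction H)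
    (hu : SmoothHomogeneous 1 u) :
    ∀ᶠ t in nhds (0 : ℝ), ∀ x : sphere (0 : Euc n) 1, 0 < H x + t * u x := by
  have h_cont : Continuous fun z : ℝ × sphere (0 : Euc n) 1 ↦ H z.2 + z.1 * u z.2 :=
    (hH.continuous_sphere.comp continuous_snd).add
      (continuous_fst.mul (hu.continuous_sphere.comp continuous_snd))
  exact eventually_forall_pos_of_continuous h_cont fun x ↦ by simpa using hH.pos_sphere x

lemma eventually_posDef_bmat_add_smul (hH : IsSmoothSupportFunction H)
    (hu : SmoothHomogeneous 1 u) :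
    ∀ᶠ t in nhds (0 : ℝ), ∀ x : sphere (0 : Euc n) 1, (bmat n H x + t • bmat n u x).PosDef := by
  have h_vec : Continuous fun z : ℝ × sphere (0 : Euc n) 1 × sphere (0 : Euc n) 1 ↦
      z.2.2.1.ofLp :=
    (PiLp.continuous_ofLp 2 _).comp
      (continuous_subtype_val.comp (continuous_snd.comp continuous_snd))
  have h_form := h_vec.dotProduct (((hH.continuous_bmat_add_smul hu).comp
    (continuous_fst.prodMk (continuous_fst.comp continuous_snd))).matrix_mulVec h_vec)
  have h_pos := eventually_forall_pos_of_continuous (t₀ := 0) h_form fun z ↦ by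
    simpa using (hH.posDef z.1).dotProduct_mulVec_pos (x := z.2.1.ofLp)
      (by simpa using ne_zero_of_mem_unit_sphere z.2)
  filter_upwards [h_pos] with t ht x
  have hx := ne_zero_of_mem_unit_sphere x
  refine .of_dotProduct_mulVec_pos ((bmat_isHermitian hH.toSmoothHomogeneous hx).add
    ((bmat_isHermitian hu hx).smul (.all t))) fun v hv ↦ ?_
  obtain ⟨s, hs, y, hy⟩ := exists_pos_smul_sphere (y := WithLp.toLp 2 v) (by simpa using hv)
  obtain rfl : s • y.1.ofLp = v := congrArg WithLp.ofLp hy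
  have := ht (x, y)
  dsimp at this
  rw [star_trivial, mulVec_smul, smul_dotProduct, dotProduct_smul]
  positivity

lemma eventually_add_const_mul (hH : IsSmoothSupportFunction H) (hu : SmoothHomogeneous 1 u) :
    ∀ᶠ t in nhds (0 : ℝ), IsSmoothSupportFunction fun y ↦ H y + t * u y := by
  filter_upwards [hH.eventually_add_const_mul_pos hu, hH.eventually_posDef_bmat_add_smul hu]
    with t h_pos h_posDef
  refine ⟨hH.add_const_mul hu t, h_pos, fun x ↦ ?_⟩
  rw [bmat_add_const_smul hH.toSmoothHomogeneous hu t (ne_zero_of_mem_unit_sphere x)]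
  exact h_posDef x

lemma continuous_div (hH : IsSmoothSupportFunction H) (hu : SmoothHomogeneous 1 u) :
    Continuous fun x : sphere (0 : Euc n) 1 ↦ u x / H x :=
  hu.continuous_sphere.div hH.continuous_sphere fun x ↦ (hH.pos_sphere x).ne'

lemma hasDerivAt_integral_det_mul_pow (hH : IsSmoothSupportFunction H)
    (hu : SmoothHomogeneous 1 u) :
    HasDerivAt (fun t ↦ ∫ x : sphere (0 : Euc n) 1,
        (bmat n H x).det * (1 + t * (u x / H x)) ^ (n + 1) ∂sphMeasure n)
      ((n + 1) * ∫ x : sphere (0 : Euc n) 1, u x / H x * (bmat n H x).det ∂sphMeasure n) 0 := by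
  have h_det := (continuous_bmat hH.toSmoothHomogeneous).matrix_det.comp (continuous_snd (X := ℝ))
  have h_div := (hH.continuous_div hu).comp (continuous_snd (X := ℝ))
  have h_line := (continuous_const (y := (1 : ℝ))).add (continuous_fst.mul h_div)
  have h_deriv (t : ℝ) (x : sphere (0 : Euc n) 1) :
      HasDerivAt (fun t ↦ (bmat n H x).det * (1 + t * (u x / H x)) ^ (n + 1))
        ((bmat n H x).det * ((n + 1) * (1 + t * (u x / H x)) ^ n * (u x / H x))) t := by
    simpa using ((((hasDerivAt_id t).mul_const (u x / H x)).const_add 1).fun_pow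
      (n + 1)).const_mul (bmat n H x).det
  have h_int := hasDerivAt_integral_of_continuousOn (μ := sphMeasure n) (t₀ := 0)
    Filter.univ_mem (h_det.mul (h_line.pow (n + 1))).continuousOn
    (h_det.mul ((continuous_const.mul (h_line.pow n)).mul h_div)).continuousOn fun t _ ↦ h_deriv t
  rw [← integral_const_mul]
  refine h_int.congr_deriv (integral_congr_ae (.of_forall fun x ↦ ?_))
  ring

-- The two sides are the derivatives at `t = 0` of the two sides of `coneVolume_le_integral` for
-- the support function `H + t u`, an inequality that is sharp at `t = 0`.
theorem integral_trace_adjugate_mul (hH : IsSmoothSupportFunction H)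
    (hu : SmoothHomogeneous 1 u) :
    ∫ x : sphere (0 : Euc n) 1, ((bmat n H x).adjugate * bmat n u x).trace ∂sphMeasure n =
      (n + 1) * ∫ x : sphere (0 : Euc n) 1, u x / H x * (bmat n H x).det ∂sphMeasure n := by
  have h_vol := hH.toSmoothHomogeneous.hasDerivAt_coneVolume hu 0
  simp only [zero_mul, add_zero] at h_vol
  have h_min : IsLocalMin (fun t ↦ ∫ x : sphere (0 : Euc n) 1,
      (bmat n H x).det * (1 + t * (u x / H x)) ^ (n + 1) ∂sphMeasure n -
        coneVolume fun y ↦ H y + t * u y) 0 := by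
    filter_upwards [hH.eventually_add_const_mul hu] with t ht
    have h_ratio (x : sphere (0 : Euc n) 1) : (H x + t * u x) / H x = 1 + t * (u x / H x) := by
      rw [add_div, div_self (hH.pos_sphere x).ne', mul_div_assoc]
    have h_le := hH.coneVolume_le_integral ht
    simp only [h_ratio] at h_le
    simpa [coneVolume] using h_le
  have h_zero := h_min.hasDerivAt_eq_zero ((hH.hasDerivAt_integral_det_mul_pow hu).fun_sub h_vol)
  exact (sub_eq_zero.1 h_zero).symm

lemma hasDerivAt_integral_div_mul_det (hH : IsSmoothSupportFunction H)
    (hu : SmoothHomogeneous 1 u) :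
    HasDerivAt (fun t ↦ ∫ x : sphere (0 : Euc n) 1,
        u x / (H x + t * u x) * (bmat n H x + t • bmat n u x).det ∂sphMeasure n)
      (∫ x : sphere (0 : Euc n) 1, (u x / H x * ((bmat n H x).adjugate * bmat n u x).trace -
        (u x / H x) ^ 2 * (bmat n H x).det) ∂sphMeasure n) 0 := by
  have h_pos := hH.eventually_add_const_mul_pos hu
  have h_bmat := hH.continuous_bmat_add_smul hu
  have h_trace := hH.continuous_trace_adjugate_mul hu
  have h_ratio : ContinuousOn (fun z : ℝ × sphere (0 : Euc n) 1 ↦ u z.2 / (H z.2 + z.1 * u z.2))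
      ({t | ∀ x : sphere (0 : Euc n) 1, 0 < H x + t * u x} ×ˢ Set.univ) := by
    have hu_snd := hu.continuous_sphere.comp (continuous_snd (X := ℝ))
    have hH_snd := hH.continuous_sphere.comp (continuous_snd (X := ℝ))
    exact hu_snd.continuousOn.div (hH_snd.add (continuous_fst.mul hu_snd)).continuousOn
      fun z hz ↦ (hz.1 z.2).ne'
  have h_deriv (t : ℝ) (ht : ∀ x : sphere (0 : Euc n) 1, 0 < H x + t * u x)
      (x : sphere (0 : Euc n) 1) :
      HasDerivAt (fun t ↦ u x / (H x + t * u x) * (bmat n H x + t • bmat n u x).det)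
        (u x / (H x + t * u x) * ((bmat n H x + t • bmat n u x).adjugate * bmat n u x).trace -
          (u x / (H x + t * u x)) ^ 2 * (bmat n H x + t • bmat n u x).det) t := by
    have h_den : HasDerivAt (fun t ↦ H x + t * u x) (u x) t := by
      simpa using ((hasDerivAt_id t).mul_const (u x)).const_add (H x)
    refine (((hasDerivAt_const t (u x)).fun_div h_den (ht x).ne').fun_mul
      (hasDerivAt_det_add_smul (bmat n H x) (bmat n u x) t)).congr_deriv ?_
    field_simp [(ht x).ne']
    ring
  have h_int := hasDerivAt_integral_of_continuousOn (μ := sphMeasure n) (t₀ := 0) h_pos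
    (h_ratio.mul h_bmat.matrix_det.continuousOn)
    ((h_ratio.mul h_trace.continuousOn).sub ((h_ratio.pow 2).mul h_bmat.matrix_det.continuousOn))
    h_deriv
  simpa using h_int

lemma eventually_coneVolume_mul_le_sq (hH : IsSmoothSupportFunction H)
    (hu : SmoothHomogeneous 1 u) :
    ∀ᶠ t in nhds (0 : ℝ), coneVolume (fun y ↦ H y + t * u y) *
      coneVolume (fun y ↦ H y + -t * u y) ≤ coneVolume H ^ 2 := by
  have h_admissible := hH.eventually_add_const_mul hu
  filter_upwards [h_admissible,
    (continuous_neg.tendsto' (0 : ℝ) 0 neg_zero).eventually h_admissible] with t ht ht_neg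
  have h_mid : (fun y ↦ 1 / 2 * (H y + t * u y) + 1 / 2 * (H y + -t * u y)) = H := by
    ext y
    ring
  simpa only [h_mid] using ht.coneVolume_mul_le_sq ht_neg (by rwa [h_mid])

theorem integral_mul_trace_adjugate_le (hH : IsSmoothSupportFunction H)
    (hu : SmoothHomogeneous 1 u)
    (h_mean : ∫ x : sphere (0 : Euc n) 1, u x / H x * (bmat n H x).det ∂sphMeasure n = 0) :
    ∫ x : sphere (0 : Euc n) 1, u x / H x * ((bmat n H x).adjugate * bmat n u x).trace
        ∂sphMeasure n ≤
      ∫ x : sphere (0 : Euc n) 1, (u x / H x) ^ 2 * (bmat n H x).det ∂sphMeasure n := by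
  have h_bmat (t : ℝ) (x : sphere (0 : Euc n) 1) :=
    bmat_add_const_smul hH.toSmoothHomogeneous hu t (ne_zero_of_mem_unit_sphere x)
  have h_first : ∀ᶠ t in nhds (0 : ℝ), HasDerivAt (fun t ↦ coneVolume fun y ↦ H y + t * u y)
      ((n + 1) * ∫ x : sphere (0 : Euc n) 1,
        u x / (H x + t * u x) * (bmat n H x + t • bmat n u x).det ∂sphMeasure n) t := by
    filter_upwards [hH.eventually_add_const_mul hu] with t ht
    have h_deriv := hH.hasDerivAt_coneVolume hu t
    rw [ht.integral_trace_adjugate_mul hu] at h_deriv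
    simpa only [h_bmat] using h_deriv
  have h_second := mul_le_sq_of_eventually_mul_neg_le_sq h_first
    ((hH.hasDerivAt_integral_div_mul_det hu).const_mul _)
    (by simpa using hH.eventually_coneVolume_mul_le_sq hu)
  simp only [zero_mul, add_zero, zero_smul, h_mean, mul_zero] at h_second
  have h_bmat_H := continuous_bmat hH.toSmoothHomogeneous
  have h_div := hH.continuous_div hu
  have h_sub := integral_sub (μ := sphMeasure n)
    (integrable_of_continuous
      (h_div.mul (h_bmat_H.matrix_adjugate.matrix_mul (continuous_bmat hu)).matrix_trace))
    (integrable_of_continuous ((h_div.pow 2).mul h_bmat_H.matrix_det))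
  simp only [Pi.mul_apply, Pi.pow_apply] at h_sub
  rw [h_sub] at h_second
  have h_nonpos := nonpos_of_mul_nonpos_left (by simpa using h_second) hH.coneVolume_pos
  exact sub_nonpos.1 (nonpos_of_mul_nonpos_right h_nonpos (by positivity))

end IsSmoothSupportFunction

end Variation

section Poincare

lemma integral_mul_norm_sub_mean_sq {X E : Type*} [MeasurableSpace X] {μ : Measure X}
    [NormedAddCommGroup E] [InnerProductSpace ℝ E] [CompleteSpace E] {ρ : X → ℝ} {g : X → E}
    (hρ : Integrable ρ μ) (hρg : Integrable (fun x ↦ ρ x • g x) μ)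
    (hρg_sq : Integrable (fun x ↦ ρ x * ‖g x‖ ^ 2) μ) (h_mass : ∫ x, ρ x ∂μ ≠ 0) :
    ∫ x, ρ x * ‖g x - (∫ y, ρ y ∂μ)⁻¹ • ∫ y, ρ y • g y ∂μ‖ ^ 2 ∂μ =
      ∫ x, ρ x * ‖g x‖ ^ 2 ∂μ - ‖∫ x, ρ x • g x ∂μ‖ ^ 2 / ∫ x, ρ x ∂μ := by
  have h_expand (m : E) (x : X) : ρ x * ‖g x - m‖ ^ 2 =
      ρ x * ‖g x‖ ^ 2 - (2 * ⟪m, ρ x • g x⟫ - ρ x * ‖m‖ ^ 2) := by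
    rw [norm_sub_sq_real, real_inner_smul_right, real_inner_comm]
    ring
  have h_int_inner (m : E) : Integrable (fun x ↦ 2 * ⟪m, ρ x • g x⟫) μ :=
    (hρg.const_inner m).const_mul 2
  have h_int_linear (m : E) : Integrable (fun x ↦ 2 * ⟪m, ρ x • g x⟫ - ρ x * ‖m‖ ^ 2) μ :=
    (h_int_inner m).sub (hρ.mul_const _)
  simp only [h_expand]
  rw [integral_sub hρg_sq (h_int_linear _), integral_sub (h_int_inner _) (hρ.mul_const _),
    integral_const_mul, integral_inner hρg, integral_mul_const, real_inner_smul_left,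
    real_inner_self_eq_norm_sq, norm_smul, norm_inv, mul_pow, inv_pow, Real.norm_eq_abs, sq_abs]
  field_simp
  ring

variable {n : ℕ} {H f : Euc n → ℝ} {F : Euc n → Euc n} {x : Euc n}

/-- The density with respect to `sphMeasure` of the centro-affine Dirichlet energy `|∇f|_g² dV` of
a `0`-homogeneous function `f`, with `det B • B⁻¹` written as the adjugate of `B = bmat n H x`. -/
def dirichletDensity (H f : Euc n → ℝ) (x : Euc n) : ℝ :=
  H x * ((gradient f x).ofLp ⬝ᵥ (bmat n H x).adjugate *ᵥ (gradient f x).ofLp)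

-- `bmat n H x` maps the tangential part of `w` to `∇f`, so its adjugate maps `∇f` back up to `det`.
lemma dirichletDensity_eq_of_gradient_eq {w : Euc n} (hH : SmoothHomogeneous 1 H) (hx : ‖x‖ = 1)
    (h_grad : gradient f x = hess H x w) :
    dirichletDensity H f x = H x * (bmat n H x).det * ⟪hess H x w, w⟫ := by
  have hx0 : x ≠ 0 := norm_ne_zero_iff.1 (hx ▸ one_ne_zero)
  set t := w - ⟪x, w⟫ • x with ht
  have h_hess : hess H x t = hess H x w := by
    rw [ht, map_sub, map_smul, hess_self hH hx0, smul_zero, sub_zero]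
  have h_tangent : ⟪x, t⟫ = 0 := by
    rw [ht, inner_sub_right, real_inner_smul_right, real_inner_self_eq_norm_sq, hx]
    ring
  have h_inner : ⟪hess H x w, t⟫ = ⟪hess H x w, w⟫ := by
    rw [inner_hess_comm hH hx0, h_hess, ← inner_hess_comm hH hx0]
  have h_mulVec : (gradient f x).ofLp = bmat n H x *ᵥ t.ofLp := by
    rw [bmat_mulVec hH hx0, h_tangent, h_hess, h_grad, mul_zero, zero_smul, add_zero]
  have h_adjugate : (bmat n H x).adjugate *ᵥ (gradient f x).ofLp = (bmat n H x).det • t.ofLp := by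
    rw [h_mulVec, mulVec_mulVec, adjugate_mul, smul_mulVec, one_mulVec]
  rw [dirichletDensity, h_adjugate, dotProduct_smul, smul_eq_mul, h_grad, ← mul_assoc, ← h_inner,
    EuclideanSpace.inner_eq_star_dotProduct, star_trivial, dotProduct_comm]

lemma trace_adjugate_mul_bmat_mul_mul_self (hH : SmoothHomogeneous 1 H)
    (hf : SmoothHomogeneous 0 f) (hx : x ≠ 0) :
    ((bmat n H x).adjugate * bmat n (fun y ↦ f y * (f y * H y)) x).trace =
      2 * (f x * ((bmat n H x).adjugate * bmat n (fun y ↦ f y * H y) x).trace) -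
        (n + 1) * (f x ^ 2 * (bmat n H x).det) +
        2 * dirichletDensity H f x := by
  rw [dirichletDensity, bmat_mul_mul_self hf hH hx, mul_add, mul_sub]
  simp only [Matrix.mul_smul, adjugate_mul, mul_vecMulVec, trace_add, trace_sub, trace_smul,
    trace_one, trace_vecMulVec, Fintype.card_fin, smul_eq_mul, dotProduct_comm (gradient f x).ofLp]
  push_cast
  ring

namespace IsSmoothSupportFunction

lemma continuous_dirichletDensity (hH : IsSmoothSupportFunction H) (hf : SmoothHomogeneous 0 f) :
    Continuous fun x : sphere (0 : Euc n) 1 ↦ dirichletDensity H f x := by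
  have h_grad : Continuous fun x : sphere (0 : Euc n) 1 ↦ (gradient f x).ofLp :=
    (PiLp.continuous_ofLp 2 _).comp hf.gradient.continuous_sphere
  exact hH.continuous_sphere.mul (h_grad.dotProduct
    ((continuous_bmat hH.toSmoothHomogeneous).matrix_adjugate.matrix_mulVec h_grad))

-- First variation applied to `f² H`, where `bmat` of a product produces the Dirichlet density.
lemma integral_mul_trace_adjugate_mul_bmat_mul (hH : IsSmoothSupportFunction H)
    (hf : SmoothHomogeneous 0 f) :
    ∫ x : sphere (0 : Euc n) 1,
        f x * ((bmat n H x).adjugate * bmat n (fun y ↦ f y * H y) x).trace ∂sphMeasure n =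
      (n + 1) * ∫ x : sphere (0 : Euc n) 1, f x ^ 2 * (bmat n H x).det ∂sphMeasure n -
        ∫ x : sphere (0 : Euc n) 1, dirichletDensity H f x ∂sphMeasure n := by
  have hfH : SmoothHomogeneous 1 fun y ↦ f y * H y :=
    (hf.mul hH.toSmoothHomogeneous).of_degree_eq (zero_add 1)
  have h_first := hH.integral_trace_adjugate_mul ((hf.mul hfH).of_degree_eq (zero_add 1))
  have h_ratio (x : sphere (0 : Euc n) 1) : f x * (f x * H x) / H x = f x ^ 2 := by
    rw [← mul_assoc, mul_div_cancel_right₀ _ (hH.pos_sphere x).ne', pow_two]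
  have h_trace (x : sphere (0 : Euc n) 1) :=
    trace_adjugate_mul_bmat_mul_mul_self hH.toSmoothHomogeneous hf (ne_zero_of_mem_unit_sphere x)
  have h_bmat := continuous_bmat hH.toSmoothHomogeneous
  have h_int_trace : Integrable (fun x : sphere (0 : Euc n) 1 ↦
      f x * ((bmat n H x).adjugate * bmat n (fun y ↦ f y * H y) x).trace) (sphMeasure n) :=
    integrable_of_continuous (hf.continuous_sphere.mul
      (h_bmat.matrix_adjugate.matrix_mul (continuous_bmat hfH)).matrix_trace)
  have h_int_det : Integrable (fun x : sphere (0 : Euc n) 1 ↦ f x ^ 2 * (bmat n H x).det)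
      (sphMeasure n) :=
    integrable_of_continuous ((hf.continuous_sphere.pow 2).mul h_bmat.matrix_det)
  have h_int_density := integrable_of_continuous (μ := sphMeasure n)
    (hH.continuous_dirichletDensity hf)
  have h_int_sub : Integrable (fun x : sphere (0 : Euc n) 1 ↦
      2 * (f x * ((bmat n H x).adjugate * bmat n (fun y ↦ f y * H y) x).trace) -
        (n + 1) * (f x ^ 2 * (bmat n H x).det)) (sphMeasure n) :=
    (h_int_trace.const_mul 2).sub (h_int_det.const_mul _)
  simp only [h_ratio, h_trace] at h_first
  rw [integral_add h_int_sub (h_int_density.const_mul 2),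
    integral_sub (h_int_trace.const_mul 2) (h_int_det.const_mul _), integral_const_mul,
    integral_const_mul, integral_const_mul] at h_first
  linarith

lemma mul_integral_sq_le_of_integral_eq_zero (hH : IsSmoothSupportFunction H)
    (hf : SmoothHomogeneous 0 f)
    (h_mean : ∫ x : sphere (0 : Euc n) 1, f x * (bmat n H x).det ∂sphMeasure n = 0) :
    n * ∫ x : sphere (0 : Euc n) 1, f x ^ 2 * (bmat n H x).det ∂sphMeasure n ≤
      ∫ x : sphere (0 : Euc n) 1, dirichletDensity H f x ∂sphMeasure n := by
  have h_ratio (x : sphere (0 : Euc n) 1) : f x * H x / H x = f x :=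
    mul_div_cancel_right₀ _ (hH.pos_sphere x).ne'
  have h_second := hH.integral_mul_trace_adjugate_le
    ((hf.mul hH.toSmoothHomogeneous).of_degree_eq (zero_add 1))
    (by simpa only [h_ratio] using h_mean)
  simp only [h_ratio, hH.integral_mul_trace_adjugate_mul_bmat_mul hf] at h_second
  linarith

theorem mul_variance_le_integral_dirichletDensity (hH : IsSmoothSupportFunction H)
    (hf : SmoothHomogeneous 0 f) :
    n * (∫ x : sphere (0 : Euc n) 1, (bmat n H x).det * f x ^ 2 ∂sphMeasure n -
        (∫ x : sphere (0 : Euc n) 1, (bmat n H x).det * f x ∂sphMeasure n) ^ 2 / coneVolume H) ≤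
      ∫ x : sphere (0 : Euc n) 1, dirichletDensity H f x ∂sphMeasure n := by
  have h_vol : ∫ x : sphere (0 : Euc n) 1, (bmat n H x).det ∂sphMeasure n ≠ 0 :=
    hH.coneVolume_pos.ne'
  have h_det := (continuous_bmat hH.toSmoothHomogeneous).matrix_det
  have h_int_det := integrable_of_continuous (μ := sphMeasure n) h_det
  have h_int : Integrable (fun x : sphere (0 : Euc n) 1 ↦ (bmat n H x).det * f x)
    (sphMeasure n) := integrable_of_continuous (h_det.mul hf.continuous_sphere)
  have h_variance := integral_mul_norm_sub_mean_sq h_int_det (g := fun x ↦ f x.1) h_int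
    (integrable_of_continuous (h_det.mul (hf.continuous_sphere.norm.pow 2))) h_vol
  simp only [Real.norm_eq_abs, sq_abs, smul_eq_mul] at h_variance
  set mean := (∫ x : sphere (0 : Euc n) 1, (bmat n H x).det ∂sphMeasure n)⁻¹ *
    ∫ x : sphere (0 : Euc n) 1, (bmat n H x).det * f x ∂sphMeasure n with h_mean
  have h_centered : SmoothHomogeneous 0 fun y ↦ f y - mean := by
    simpa only [sub_eq_add_neg] using hf.add (.const (-mean))
  have h_density (x : Euc n) :
      dirichletDensity H (fun y ↦ f y - mean) x = dirichletDensity H f x := by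
    simp only [dirichletDensity, gradient, fderiv_sub_const]
  have h_zero : ∫ x : sphere (0 : Euc n) 1, (f x - mean) * (bmat n H x).det ∂sphMeasure n = 0 := by
    simp only [mul_comm _ (bmat n H _).det, mul_sub]
    rw [integral_sub h_int (h_int_det.mul_const mean), integral_mul_const, h_mean,
      mul_inv_cancel_left₀ h_vol, sub_self]
  rw [coneVolume, ← h_variance]
  simpa only [h_density, mul_comm _ (bmat n H _).det] using
    hH.mul_integral_sq_le_of_integral_eq_zero h_centered h_zero

theorem mul_variance_le_integral_sum_dirichletDensity (hH : IsSmoothSupportFunction H)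
    (hF : SmoothHomogeneous 0 F) :
    n * (∫ x : sphere (0 : Euc n) 1, (bmat n H x).det * ‖F x‖ ^ 2 ∂sphMeasure n -
        ‖∫ x : sphere (0 : Euc n) 1, (bmat n H x).det • F x ∂sphMeasure n‖ ^ 2 / coneVolume H) ≤
      ∫ x : sphere (0 : Euc n) 1, ∑ k, dirichletDensity H (fun y ↦ F y k) x ∂sphMeasure n := by
  have hF_coord (k : Fin (n + 1)) : SmoothHomogeneous 0 fun y ↦ F y k :=
    hF.clm_comp (EuclideanSpace.proj (𝕜 := ℝ) k)
  have h_det := (continuous_bmat hH.toSmoothHomogeneous).matrix_det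
  have h_int : Integrable (fun x : sphere (0 : Euc n) 1 ↦ (bmat n H x).det • F x) (sphMeasure n) :=
    integrable_of_continuous (h_det.smul hF.continuous_sphere)
  have h_coord (k : Fin (n + 1)) :
      ∫ x : sphere (0 : Euc n) 1, (bmat n H x).det * F x k ∂sphMeasure n =
        (∫ x : sphere (0 : Euc n) 1, (bmat n H x).det • F x ∂sphMeasure n) k :=
    (EuclideanSpace.proj (𝕜 := ℝ) k : Euc n →L[ℝ] ℝ).integral_comp_comm h_int
  simp only [EuclideanSpace.real_norm_sq_eq, Finset.mul_sum, Finset.sum_div, ← h_coord]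
  have h_int_sq (k : Fin (n + 1)) :
      Integrable (fun x : sphere (0 : Euc n) 1 ↦ (bmat n H x).det * F x k ^ 2) (sphMeasure n) :=
    integrable_of_continuous (h_det.mul ((hF_coord k).continuous_sphere.pow 2))
  rw [integral_finsetSum _ fun k _ ↦ h_int_sq k,
    integral_finsetSum _ fun k _ ↦ integrable_of_continuous
      (hH.continuous_dirichletDensity (hF_coord k)), ← Finset.sum_sub_distrib, Finset.mul_sum]
  exact Finset.sum_le_sum fun k _ ↦ hH.mul_variance_le_integral_dirichletDensity (hF_coord k)

end IsSmoothSupportFunction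

end Poincare

section PowGradient

variable {n : ℕ} {H : Euc n → ℝ} {F : Euc n → Euc n} {x : Euc n} {p α : ℝ}

lemma gradient_rpow {E : Type*} [NormedAddCommGroup E] [InnerProductSpace ℝ E] [CompleteSpace E]
    {u : E → ℝ} {x : E} (hu : DifferentiableAt ℝ u x) (h0 : u x ≠ 0) (a : ℝ) :
    gradient (fun y ↦ u y ^ a) x = (a * u x ^ (a - 1)) • gradient u x := by
  rw [gradient, (hu.hasFDerivAt.rpow_const (p := a) (Or.inl h0)).fderiv, map_smul, gradient]

lemma divergence_smul {u : Euc n → ℝ} (hu : DifferentiableAt ℝ u x) (hF : DifferentiableAt ℝ F x) :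
    divergence (fun y ↦ u y • F y) x = ⟪gradient u x, F x⟫ + u x * divergence F x := by
  simp only [divergence, fderiv_fun_smul hu hF, real_inner_comm, PiLp.inner_apply, gradient_apply,
    Finset.mul_sum, ← Finset.sum_add_distrib]
  refine Finset.sum_congr rfl fun i _ ↦ ?_
  simp only [_root_.add_apply, _root_.smul_apply, ContinuousLinearMap.smulRight_apply,
    PiLp.add_apply, PiLp.smul_apply, smul_eq_mul, RCLike.inner_apply, Real.ringHom_apply]
  ring

lemma SmoothHomogeneous.continuous_divergence {d : ℝ} (hF : SmoothHomogeneous d F) :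
    Continuous fun x : sphere (0 : Euc n) 1 ↦ divergence F x :=
  continuous_finsetSum _ fun i _ ↦
    ((hF.fderiv.apply (EuclideanSpace.single i 1)).clm_comp
      (EuclideanSpace.proj (𝕜 := ℝ) i : Euc n →L[ℝ] ℝ)).continuous_sphere

lemma inner_hess_smul_single_add_smul (hH : SmoothHomogeneous 1 H) (hx : x ≠ 0) (k : Fin (n + 1))
    (R c : ℝ) (v : Euc n) :
    ⟪hess H x (R • (EuclideanSpace.single k 1 + c • v)), R • (EuclideanSpace.single k 1 + c • v)⟫ =
      R ^ 2 * (hess H x (EuclideanSpace.single k 1) k + 2 * c * hess H x v k +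
        c ^ 2 * ⟪hess H x v, v⟫) := by
  simp only [map_smul, map_add, real_inner_smul_left, real_inner_smul_right, inner_add_left,
    inner_add_right, EuclideanSpace.inner_single_right,
    inner_hess_comm hH hx (EuclideanSpace.single k 1) v, EuclideanSpace.inner_single_left]
  simp only [smul_add, PiLp.add_apply, PiLp.smul_apply, smul_eq_mul, Real.ringHom_apply, one_mul]
  ring

/-- The vector field `r^α X`, with `X = DH` the inverse Gauss map and `r = |X|`. -/
def powGradient (α : ℝ) (H : Euc n → ℝ) (x : Euc n) : Euc n := ‖gradient H x‖ ^ α • gradient H x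

lemma inner_gradient_powGradient :
    ⟪gradient H x, powGradient α H x⟫ = ‖gradient H x‖ ^ α * ‖gradient H x‖ ^ 2 := by
  rw [powGradient, real_inner_smul_right, real_inner_self_eq_norm_sq]

lemma norm_powGradient_sq :
    ‖powGradient α H x‖ ^ 2 = (‖gradient H x‖ ^ α) ^ 2 * ‖gradient H x‖ ^ 2 := by
  rw [powGradient, norm_smul, mul_pow, Real.norm_eq_abs, sq_abs]

namespace IsSmoothSupportFunction

lemma inner_hess_nonneg (hH : IsSmoothSupportFunction H) (hx : x ≠ 0) (v : Euc n) :
    0 ≤ ⟪hess H x v, v⟫ := by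
  by_cases hxv : LinearIndependent ℝ ![x, v]
  · exact (hH.inner_hess_pos hxv).le
  · obtain ⟨c, rfl⟩ : ∃ c : ℝ, c • x = v := by
      simpa [LinearIndependent.pair_iff' hx] using hxv
    rw [map_smul, hess_self hH.toSmoothHomogeneous hx, smul_zero, inner_zero_left]

lemma smoothHomogeneous_powGradient (hH : IsSmoothSupportFunction H) (α : ℝ) :
    SmoothHomogeneous 0 (powGradient α H) := by
  have h_grad := hH.gradient.of_degree_eq (sub_self 1)
  have h_norm := h_grad.norm fun y hy ↦ hH.gradient_ne_zero hy
  exact ((h_norm.rpow (fun y hy ↦ norm_pos_iff.2 (hH.gradient_ne_zero hy)) α).smul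
    h_grad).of_degree_eq (by ring)

lemma fderiv_powGradient_apply (hH : IsSmoothSupportFunction H) (α : ℝ) (hx : x ≠ 0) (v : Euc n) :
    fderiv ℝ (powGradient α H) x v = ‖gradient H x‖ ^ α •
      (hess H x v + (α * ⟪gradient H x, hess H x v⟫ / ‖gradient H x‖ ^ 2) • gradient H x) := by
  have h_grad := hH.gradient.hasFDerivAt hx
  have h0 := hH.gradient_ne_zero hx
  have h_norm := norm_ne_zero_iff.2 h0
  have h_prod := ((((hasFDerivAt_norm h0).comp x h_grad).rpow_const (p := α)
    (Or.inl h_norm)).smul h_grad).fderiv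
  refine (DFunLike.congr_fun h_prod v).trans ?_
  simp only [Function.comp_apply, Real.rpow_sub_one h_norm, _root_.add_apply, _root_.smul_apply,
    ContinuousLinearMap.smulRight_apply, ContinuousLinearMap.comp_apply, innerSL_apply_apply,
    smul_eq_mul, smul_add, smul_smul, hess]
  congr 2
  field_simp

lemma gradient_powGradient_coord (hH : IsSmoothSupportFunction H) (α : ℝ) (hx : x ≠ 0)
    (k : Fin (n + 1)) :
    gradient (fun y ↦ powGradient α H y k) x = hess H x (‖gradient H x‖ ^ α •
      (EuclideanSpace.single k 1 + (α * gradient H x k / ‖gradient H x‖ ^ 2) • gradient H x)) := by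
  have h_coord := ((EuclideanSpace.proj (𝕜 := ℝ) k : Euc n →L[ℝ] ℝ).hasFDerivAt.comp x
    ((hH.smoothHomogeneous_powGradient α).hasFDerivAt hx)).fderiv
  refine ext_inner_right ℝ fun v ↦ ?_
  rw [inner_gradient_left, inner_hess_comm hH.toSmoothHomogeneous hx, real_inner_smul_left,
    inner_add_left, real_inner_smul_left, EuclideanSpace.inner_single_left]
  refine (DFunLike.congr_fun h_coord v).trans ?_
  simp only [ContinuousLinearMap.comp_apply, hH.fderiv_powGradient_apply α hx, inner_gradient_left,
    smul_add, PiLp.proj_apply, PiLp.add_apply, PiLp.smul_apply, smul_eq_mul, Real.ringHom_apply,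
    one_mul]
  ring

lemma divergence_powGradient (hH : IsSmoothSupportFunction H) (α : ℝ) (hx : x ≠ 0) :
    divergence (powGradient α H) x = ‖gradient H x‖ ^ α * (divergence (gradient H) x +
      α * (⟪hess H x (gradient H x), gradient H x⟫ / ‖gradient H x‖ ^ 2)) := by
  have h_single (k : Fin (n + 1)) : ⟪gradient H x, hess H x (EuclideanSpace.single k 1)⟫ =
      hess H x (gradient H x) k := by
    rw [← inner_hess_comm hH.toSmoothHomogeneous hx, EuclideanSpace.inner_single_right]
    simp
  simp only [divergence, hH.fderiv_powGradient_apply α hx, h_single, PiLp.inner_apply,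
    Finset.mul_sum, Finset.sum_div, ← Finset.sum_add_distrib]
  refine Finset.sum_congr rfl fun k _ ↦ ?_
  simp only [hess, smul_add, PiLp.add_apply, PiLp.smul_apply, smul_eq_mul, RCLike.inner_apply,
    Real.ringHom_apply]
  ring

lemma sum_dirichletDensity_powGradient (hH : IsSmoothSupportFunction H) (α : ℝ)
    (x : sphere (0 : Euc n) 1) :
    ∑ k, dirichletDensity H (fun y ↦ powGradient α H y k) x =
      H x * (bmat n H x).det * (‖gradient H x.1‖ ^ α) ^ 2 * (divergence (gradient H) x +
        (2 * α + α ^ 2) * (⟪hess H x (gradient H x), gradient H x.1⟫ / ‖gradient H x.1‖ ^ 2)) := by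
  have hx := ne_zero_of_mem_unit_sphere x
  have h_norm : ‖gradient H x.1‖ ≠ 0 := norm_ne_zero_iff.2 (hH.gradient_ne_zero hx)
  have h_inner : ∑ k, hess H x (gradient H x) k * gradient H x k =
      ⟪hess H x (gradient H x), gradient H x.1⟫ := by
    rw [PiLp.inner_apply]
    simp [mul_comm]
  simp only [fun k ↦ dirichletDensity_eq_of_gradient_eq hH.toSmoothHomogeneous
    (norm_eq_of_mem_sphere x) (hH.gradient_powGradient_coord α hx k),
    inner_hess_smul_single_add_smul hH.toSmoothHomogeneous hx]
  have h_sum : ∑ k, (hess H x (EuclideanSpace.single k 1) k +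
      2 * (α * gradient H x k / ‖gradient H x.1‖ ^ 2) * hess H x (gradient H x) k +
      (α * gradient H x k / ‖gradient H x.1‖ ^ 2) ^ 2 *
        ⟪hess H x (gradient H x), gradient H x.1⟫) =
      divergence (gradient H) x + (2 * α + α ^ 2) *
        (⟪hess H x (gradient H x), gradient H x.1⟫ / ‖gradient H x.1‖ ^ 2) := by
    calc _ = divergence (gradient H) x +
          2 * α / ‖gradient H x.1‖ ^ 2 * ∑ k, hess H x (gradient H x) k * gradient H x k +
          α ^ 2 / (‖gradient H x.1‖ ^ 2) ^ 2 * ⟪hess H x (gradient H x), gradient H x.1⟫ *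
            ∑ k, gradient H x k ^ 2 := by
          rw [Finset.sum_add_distrib, Finset.sum_add_distrib, Finset.mul_sum, Finset.mul_sum,
            divergence]
          congr 1
          · congr 1
            refine Finset.sum_congr rfl fun k _ ↦ ?_
            ring
          · refine Finset.sum_congr rfl fun k _ ↦ ?_
            ring
      _ = _ := by
          rw [h_inner, ← EuclideanSpace.real_norm_sq_eq]
          field_simp
          ring
  rw [← h_sum, Finset.mul_sum]
  exact Finset.sum_congr rfl fun k _ ↦ by ring

lemma sum_dirichletDensity_powGradient_le (hH : IsSmoothSupportFunction H) (hα₁ : -1 ≤ α)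
    (hα₀ : α ≤ 0) (x : sphere (0 : Euc n) 1) :
    ∑ k, dirichletDensity H (fun y ↦ powGradient α H y k) x ≤
      H x * (bmat n H x).det * ‖gradient H x.1‖ ^ α * divergence (powGradient α H) x := by
  have hx := ne_zero_of_mem_unit_sphere x
  have h_quot : 0 ≤ ⟪hess H x (gradient H x), gradient H x.1⟫ / ‖gradient H x.1‖ ^ 2 :=
    div_nonneg (hH.inner_hess_nonneg hx _) (sq_nonneg _)
  have h_factor : 0 ≤ H x * (bmat n H x).det * (‖gradient H x.1‖ ^ α) ^ 2 :=
    mul_nonneg (mul_nonneg (hH.pos_sphere x).le (hH.det_pos x).le) (sq_nonneg _)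
  have h_exponent : (2 * α + α ^ 2) * (⟪hess H x (gradient H x), gradient H x.1⟫ /
      ‖gradient H x.1‖ ^ 2) ≤ α * (⟪hess H x (gradient H x), gradient H x.1⟫ /
      ‖gradient H x.1‖ ^ 2) :=
    mul_le_mul_of_nonneg_right (by nlinarith) h_quot
  rw [hH.sum_dirichletDensity_powGradient, hH.divergence_powGradient α hx]
  calc _ ≤ _ := mul_le_mul_of_nonneg_left (add_le_add_right h_exponent _) h_factor
    _ = _ := by ring

lemma integral_rpow_mul_divergence (hH : IsSmoothSupportFunction H) (hF : SmoothHomogeneous 0 F)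
    (p : ℝ) :
    (p + 1) * ∫ x : sphere (0 : Euc n) 1, H x ^ p * ⟪gradient H x, F x⟫ ∂sphMeasure n +
        ∫ x : sphere (0 : Euc n) 1, H x ^ (p + 1) * divergence F x ∂sphMeasure n =
      (p + 1 + n) * ∫ x : sphere (0 : Euc n) 1, H x ^ (p + 1) * ⟪F x, x⟫ ∂sphMeasure n := by
  have h_pos : ∀ y ≠ 0, 0 < H y := fun y hy ↦ hH.pos hy
  have h_rpow := hH.rpow h_pos (p + 1)
  have h_div (x : sphere (0 : Euc n) 1) : divergence (fun y ↦ H y ^ (p + 1) • F y) x =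
      (p + 1) * (H x ^ p * ⟪gradient H x, F x⟫) + H x ^ (p + 1) * divergence F x := by
    have hx := ne_zero_of_mem_unit_sphere x
    rw [divergence_smul (h_rpow.differentiableAt hx) (hF.differentiableAt hx),
      gradient_rpow (hH.differentiableAt hx) (hH.pos hx).ne', add_sub_cancel_right,
      real_inner_smul_left, mul_assoc]
  have h_cont : Continuous fun x : sphere (0 : Euc n) 1 ↦
      (p + 1) * (H x ^ p * ⟪gradient H x.1, F x⟫) :=
    (((hH.rpow h_pos p).mul (hH.gradient.inner hF)).const_smul (p + 1)).continuous_sphere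
  have h_cont_div : Continuous fun x : sphere (0 : Euc n) 1 ↦ H x ^ (p + 1) * divergence F x :=
    h_rpow.continuous_sphere.mul hF.continuous_divergence
  have h_main := integral_sphere_divergence (h_rpow.smul hF)
  simp only [h_div, real_inner_smul_left] at h_main
  rw [integral_add (integrable_of_continuous h_cont) (integrable_of_continuous h_cont_div),
    integral_const_mul] at h_main
  rw [h_main]
  ring

end IsSmoothSupportFunction

end PowGradient

section SphericalGradient

variable {n : ℕ} {H : Euc n → ℝ}

lemma smoothHomogeneous_comp_normalize {E F : Type*} [NormedAddCommGroup E]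
    [InnerProductSpace ℝ E] [NormedAddCommGroup F] [NormedSpace ℝ F] {f : E → F}
    (hf : ContDiffOn ℝ (⊤ : ℕ∞) f {0}ᶜ) : SmoothHomogeneous 0 fun y ↦ f (‖y‖⁻¹ • y) where
  contDiffOn := by
    have h_norm : ContDiffOn ℝ (⊤ : ℕ∞) (fun y : E ↦ ‖y‖⁻¹) {0}ᶜ :=
      (contDiffOn_id.norm ℝ fun _ hy ↦ hy).inv fun _ hy ↦ norm_ne_zero_iff.2 hy
    exact hf.comp (h_norm.smul contDiffOn_id) fun y hy ↦
      smul_ne_zero (inv_ne_zero (norm_ne_zero_iff.2 hy)) hy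
  map_smul s y hs _ := by
    rw [Real.rpow_zero, one_smul, norm_smul, Real.norm_of_nonneg hs.le, smul_smul,
      _root_.mul_inv_rev, inv_mul_cancel_right₀ hs.ne']

lemma sphGrad_eq (hH : SmoothHomogeneous 1 H) (x : sphere (0 : Euc n) 1) :
    sphGrad n H x = gradient H x.1 - H x • x.1 := by
  have hx := ne_zero_of_mem_unit_sphere x
  have h_eq : (fun y ↦ H (‖y‖⁻¹ • y)) =ᶠ[nhds x.1] fun y ↦ ‖y‖⁻¹ * H y := by
    filter_upwards [isOpen_compl_singleton.mem_nhds hx] with y hy using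
      hH.map_smul_of_degree_one (inv_pos.2 (norm_pos_iff.2 hy)) hy
  have h_prod := (((hasDerivAt_inv (norm_ne_zero_iff.2 hx)).comp_hasFDerivAt x.1
    (hasFDerivAt_norm hx)).mul (hH.hasFDerivAt hx)).fderiv
  refine ext_inner_right ℝ fun v ↦ ?_
  rw [sphGrad, inner_gradient_left, h_eq.fderiv_eq, inner_sub_left, inner_gradient_left,
    real_inner_smul_left]
  refine (DFunLike.congr_fun h_prod v).trans ?_
  simp only [Function.comp_apply, norm_eq_of_mem_sphere, inv_one, one_smul, one_pow, neg_smul,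
    smul_neg, _root_.add_apply, _root_.neg_apply, _root_.smul_apply, coe_innerSL_apply, smul_eq_mul]
  ring

lemma inner_sphGrad_self (hH : SmoothHomogeneous 1 H) (x : sphere (0 : Euc n) 1) :
    ⟪sphGrad n H x, x.1⟫ = 0 := by
  rw [sphGrad_eq hH, inner_sub_left, hH.inner_gradient_self (ne_zero_of_mem_unit_sphere x),
    real_inner_smul_left, real_inner_self_eq_norm_sq, norm_eq_of_mem_sphere, one_pow, mul_one,
    sub_self]

lemma norm_sphGrad_sq (hH : SmoothHomogeneous 1 H) (x : sphere (0 : Euc n) 1) :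
    ‖sphGrad n H x‖ ^ 2 = ‖gradient H x.1‖ ^ 2 - H x ^ 2 := by
  rw [sphGrad_eq hH, norm_sub_sq_real, real_inner_smul_right,
    hH.inner_gradient_self (ne_zero_of_mem_unit_sphere x), norm_smul, norm_eq_of_mem_sphere,
    Real.norm_eq_abs, mul_one, sq_abs]
  ring

lemma continuous_sphGrad (hH : SmoothHomogeneous 1 H) :
    Continuous fun x : sphere (0 : Euc n) 1 ↦ sphGrad n H x :=
  (smoothHomogeneous_comp_normalize hH.contDiffOn).gradient.continuous_sphere

lemma exists_eqOn_sphere_of_sphGrad_eq_zero {f : Euc n → ℝ}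
    (hf : ContDiffOn ℝ (⊤ : ℕ∞) f {0}ᶜ) (hn : n ≠ 0)
    (h_grad : ∀ x : sphere (0 : Euc n) 1, sphGrad n f x = 0) :
    ∃ c : ℝ, ∀ x ∈ sphere (0 : Euc n) 1, f x = c := by
  have h_radial := smoothHomogeneous_comp_normalize hf
  have h_conn : IsPreconnected ({0}ᶜ : Set (Euc n)) := by
    refine (isConnected_compl_singleton_of_one_lt_rank ?_ 0).isPreconnected
    rw [← Module.finrank_eq_rank, finrank_euclideanSpace_fin]
    exact_mod_cast (by omega : 1 < n + 1)
  have h_fderiv : Set.EqOn (fderiv ℝ fun y ↦ f (‖y‖⁻¹ • y)) 0 {0}ᶜ := by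
    intro y hy
    obtain ⟨s, hs, x, rfl⟩ := exists_pos_smul_sphere hy
    have h_zero : fderiv ℝ (fun y ↦ f (‖y‖⁻¹ • y)) x.1 = 0 := by
      simpa [sphGrad, gradient] using h_grad x
    rw [h_radial.fderiv.map_smul hs (ne_zero_of_mem_unit_sphere x), h_zero, smul_zero,
      Pi.zero_apply]
  obtain ⟨c, hc⟩ := isOpen_compl_singleton.exists_is_const_of_fderiv_eq_zero h_conn
    (fun y hy ↦ (h_radial.differentiableAt hy).differentiableWithinAt) h_fderiv
  exact ⟨c, fun x hx ↦ by
    simpa [mem_sphere_zero_iff_norm.1 hx] using hc x (ne_zero_of_mem_unit_sphere ⟨x, hx⟩)⟩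

end SphericalGradient

section Rigidity

lemma eq_of_integral_mul_norm_sub_sq_nonpos {X V : Type*} [TopologicalSpace X] [CompactSpace X]
    [MeasurableSpace X] [OpensMeasurableSpace X] [NormedAddCommGroup V] {μ : Measure X}
    [IsFiniteMeasure μ] [μ.IsOpenPosMeasure] {ρ : X → ℝ} {g : X → V} {v : V}
    (hρ : Continuous ρ) (hg : Continuous g) (h_pos : ∀ x, 0 < ρ x)
    (h_int : ∫ x, ρ x * ‖g x - v‖ ^ 2 ∂μ ≤ 0) (x : X) : g x = v := by
  by_contra hx
  have h_cont : Continuous fun y ↦ ρ y * ‖g y - v‖ ^ 2 :=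
    hρ.mul ((hg.sub continuous_const).norm.pow 2)
  refine h_int.not_gt (h_cont.integral_pos_of_hasCompactSupport_nonneg_nonzero
    (.of_compactSpace _) (fun y ↦ mul_nonneg (h_pos y).le (sq_nonneg _)) (x := x) ?_)
  exact mul_ne_zero (h_pos x).ne' (pow_ne_zero 2 (norm_ne_zero_iff.2 (sub_ne_zero.2 hx)))

lemma eq_zero_of_forall_sphere_inner_eq_zero {n : ℕ} {v : Euc n}
    (hv : ∀ x : sphere (0 : Euc n) 1, ⟪v, x.1⟫ = 0) : v = 0 := by
  by_contra h0
  obtain ⟨s, -, x, hx⟩ := exists_pos_smul_sphere h0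
  refine h0 (inner_self_eq_zero (𝕜 := ℝ).1 ?_)
  nth_rewrite 2 [← hx]
  rw [real_inner_smul_right, hv x, mul_zero]

end Rigidity

section Variance

variable {n : ℕ} {H : Euc n → ℝ} {p α : ℝ}

namespace IsSmoothSupportFunction

lemma continuous_smul_sphGrad (hH : IsSmoothSupportFunction H) (α : ℝ) :
    Continuous fun x : sphere (0 : Euc n) 1 ↦ ‖gradient H x.1‖ ^ α • sphGrad n H x :=
  (hH.gradient.continuous_sphere.norm.rpow_const fun x ↦ Or.inl (norm_ne_zero_iff.2
    (hH.gradient_ne_zero (ne_zero_of_mem_unit_sphere x)))).smul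
    (continuous_sphGrad hH.toSmoothHomogeneous)

lemma smul_integral_det_smul_sphGrad (hH : IsSmoothSupportFunction H)
    (h_det : ∀ x : sphere (0 : Euc n) 1,
      (bmat n H x).det * ‖gradient H x.1‖ ^ α = H x ^ p) :
    (p + 1 + n) • ∫ x : sphere (0 : Euc n) 1,
        (bmat n H x).det • ‖gradient H x.1‖ ^ α • sphGrad n H x ∂sphMeasure n =
      (n : ℝ) • ∫ x : sphere (0 : Euc n) 1,
        (bmat n H x).det • powGradient α H x ∂sphMeasure n := by
  have h_pos : ∀ y ≠ 0, 0 < H y := fun y hy ↦ hH.pos hy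
  have h_sphGrad (x : sphere (0 : Euc n) 1) :
      (bmat n H x).det • ‖gradient H x.1‖ ^ α • sphGrad n H x =
        H x ^ p • gradient H x.1 - H x ^ (p + 1) • x.1 := by
    rw [smul_smul, h_det, sphGrad_eq hH.toSmoothHomogeneous, smul_sub, smul_smul,
      Real.rpow_add_one (hH.pos_sphere x).ne']
  have h_powGradient (x : sphere (0 : Euc n) 1) :
      (bmat n H x).det • powGradient α H x = H x ^ p • gradient H x.1 := by
    rw [powGradient, smul_smul, h_det]
  have h_gradient (x : sphere (0 : Euc n) 1) :
      gradient (fun y ↦ H y ^ (p + 1)) x.1 = (p + 1) • H x ^ p • gradient H x.1 := by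
    have hx := ne_zero_of_mem_unit_sphere x
    rw [gradient_rpow (hH.differentiableAt hx) (hH.pos hx).ne', add_sub_cancel_right, smul_smul]
  have h_int_gradient : Integrable (fun x : sphere (0 : Euc n) 1 ↦ H x ^ p • gradient H x.1)
      (sphMeasure n) :=
    integrable_of_continuous ((hH.rpow h_pos p).smul hH.gradient).continuous_sphere
  have h_int_position : Integrable (fun x : sphere (0 : Euc n) 1 ↦ H x ^ (p + 1) • x.1)
      (sphMeasure n) :=
    integrable_of_continuous ((hH.rpow h_pos (p + 1)).smul .id).continuous_sphere
  have h_main := integral_sphere_gradient (hH.rpow h_pos (p + 1))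
  simp only [h_gradient] at h_main
  rw [integral_smul, one_mul] at h_main
  simp only [h_sphGrad, h_powGradient]
  rw [integral_sub h_int_gradient h_int_position, smul_sub, ← h_main, ← sub_smul,
    add_sub_cancel_left]

lemma integral_det_mul_norm_smul_sphGrad_sq (hH : IsSmoothSupportFunction H)
    (h_det : ∀ x : sphere (0 : Euc n) 1,
      (bmat n H x).det * ‖gradient H x.1‖ ^ α = H x ^ p) :
    ∫ x : sphere (0 : Euc n) 1,
        (bmat n H x).det * ‖‖gradient H x.1‖ ^ α • sphGrad n H x‖ ^ 2 ∂sphMeasure n =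
      ∫ x : sphere (0 : Euc n) 1, (bmat n H x).det * ‖powGradient α H x‖ ^ 2 ∂sphMeasure n -
        ∫ x : sphere (0 : Euc n) 1, H x ^ (p + 1) * ⟪powGradient α H x, x⟫ ∂sphMeasure n := by
  have h_field := hH.smoothHomogeneous_powGradient α
  have h_int_norm : Integrable (fun x : sphere (0 : Euc n) 1 ↦
      (bmat n H x).det * ‖powGradient α H x‖ ^ 2) (sphMeasure n) :=
    integrable_of_continuous ((continuous_bmat hH.toSmoothHomogeneous).matrix_det.mul
      (h_field.continuous_sphere.norm.pow 2))
  have h_int_inner : Integrable (fun x : sphere (0 : Euc n) 1 ↦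
      H x ^ (p + 1) * ⟪powGradient α H x, x⟫) (sphMeasure n) :=
    integrable_of_continuous
      ((hH.rpow (fun y hy ↦ hH.pos hy) (p + 1)).mul (h_field.inner .id)).continuous_sphere
  rw [← integral_sub h_int_norm h_int_inner]
  refine integral_congr_ae (.of_forall fun x ↦ ?_)
  simp only [norm_powGradient_sq, norm_smul, mul_pow, norm_sphGrad_sq hH.toSmoothHomogeneous,
    Real.norm_eq_abs, sq_abs, Real.rpow_add_one (hH.pos_sphere x).ne', ← h_det x]
  rw [powGradient, real_inner_smul_left, hH.inner_gradient_self (ne_zero_of_mem_unit_sphere x)]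
  ring

lemma integral_sum_dirichletDensity_powGradient_le (hH : IsSmoothSupportFunction H)
    (hα₁ : -1 ≤ α) (hα₀ : α ≤ 0)
    (h_det : ∀ x : sphere (0 : Euc n) 1,
      (bmat n H x).det * ‖gradient H x.1‖ ^ α = H x ^ p) :
    ∫ x : sphere (0 : Euc n) 1,
        ∑ k, dirichletDensity H (fun y ↦ powGradient α H y k) x ∂sphMeasure n ≤
      ∫ x : sphere (0 : Euc n) 1,
        H x ^ (p + 1) * divergence (powGradient α H) x ∂sphMeasure n := by
  have h_field := hH.smoothHomogeneous_powGradient α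
  refine integral_mono
    (integrable_of_continuous (continuous_finsetSum _ fun k _ ↦ hH.continuous_dirichletDensity
      (h_field.clm_comp (EuclideanSpace.proj (𝕜 := ℝ) k))))
    (integrable_of_continuous ((hH.rpow (fun y hy ↦ hH.pos hy) (p + 1)).continuous_sphere.mul
      h_field.continuous_divergence)) fun x ↦ ?_
  refine (hH.sum_dirichletDensity_powGradient_le hα₁ hα₀ x).trans_eq ?_
  rw [mul_assoc (H x), h_det, mul_comm (H x), Real.rpow_add_one (hH.pos_sphere x).ne']

lemma mul_integral_det_mul_norm_smul_sphGrad_sq_le (hH : IsSmoothSupportFunction H)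
    (hα₁ : -1 ≤ α) (hα₀ : α ≤ 0)
    (h_det : ∀ x : sphere (0 : Euc n) 1,
      (bmat n H x).det * ‖gradient H x.1‖ ^ α = H x ^ p) :
    (p + 1 + n) * ∫ x : sphere (0 : Euc n) 1,
        (bmat n H x).det * ‖‖gradient H x.1‖ ^ α • sphGrad n H x‖ ^ 2 ∂sphMeasure n ≤
      n * (‖∫ x : sphere (0 : Euc n) 1,
        (bmat n H x).det • powGradient α H x ∂sphMeasure n‖ ^ 2 / coneVolume H) := by
  have h_field := hH.smoothHomogeneous_powGradient α
  have h_poincare := (hH.mul_variance_le_integral_sum_dirichletDensity h_field).trans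
    (hH.integral_sum_dirichletDensity_powGradient_le hα₁ hα₀ h_det)
  have h_parts := hH.integral_rpow_mul_divergence h_field p
  have h_inner (x : sphere (0 : Euc n) 1) : H x ^ p * ⟪gradient H x.1, powGradient α H x⟫ =
      (bmat n H x).det * ‖powGradient α H x‖ ^ 2 := by
    rw [← h_det, inner_gradient_powGradient, norm_powGradient_sq]
    ring
  simp only [h_inner] at h_parts
  rw [hH.integral_det_mul_norm_smul_sphGrad_sq h_det]
  linarith

theorem variance_smul_sphGrad_le (hH : IsSmoothSupportFunction H) (hn : n ≠ 0)
    (hα₁ : -1 ≤ α) (hα₀ : α ≤ 0) (hp : 0 < p + 1 + n)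
    (h_det : ∀ x : sphere (0 : Euc n) 1,
      (bmat n H x).det * ‖gradient H x.1‖ ^ α = H x ^ p) :
    ∫ x : sphere (0 : Euc n) 1, (bmat n H x).det * ‖‖gradient H x.1‖ ^ α • sphGrad n H x -
        (coneVolume H)⁻¹ • ∫ y : sphere (0 : Euc n) 1,
          (bmat n H y).det • ‖gradient H y.1‖ ^ α • sphGrad n H y ∂sphMeasure n‖ ^ 2
        ∂sphMeasure n ≤
      (p + 1) / n * ‖∫ y : sphere (0 : Euc n) 1,
        (bmat n H y).det • ‖gradient H y.1‖ ^ α • sphGrad n H y ∂sphMeasure n‖ ^ 2 /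
          coneVolume H := by
  have h_det_cont := (continuous_bmat hH.toSmoothHomogeneous).matrix_det
  have h_field_cont := hH.continuous_smul_sphGrad α
  have h_volume := hH.coneVolume_pos
  have h_bound := hH.mul_integral_det_mul_norm_smul_sphGrad_sq_le hα₁ hα₀ h_det
  have h_mean := congrArg (fun v ↦ ‖v‖ ^ 2) (hH.smul_integral_det_smul_sphGrad h_det)
  simp only [norm_smul, mul_pow, Real.norm_eq_abs, sq_abs] at h_mean
  rw [coneVolume, integral_mul_norm_sub_mean_sq (integrable_of_continuous h_det_cont)
    (integrable_of_continuous (h_det_cont.smul h_field_cont))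
    (integrable_of_continuous (h_det_cont.mul (h_field_cont.norm.pow 2))) h_volume.ne',
    ← coneVolume, sub_le_iff_le_add]
  refine le_of_mul_le_mul_left (h_bound.trans_eq ?_) hp
  field_simp
  linarith

theorem exists_eqOn_sphere_of_variance_nonpos (hH : IsSmoothSupportFunction H) (hn : n ≠ 0)
    {v : Euc n} (h_var : ∫ x : sphere (0 : Euc n) 1, (bmat n H x).det *
      ‖‖gradient H x.1‖ ^ α • sphGrad n H x - v‖ ^ 2 ∂sphMeasure n ≤ 0) :
    ∃ c : ℝ, ∀ x ∈ sphere (0 : Euc n) 1, H x = c := by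
  have h_eq := eq_of_integral_mul_norm_sub_sq_nonpos
    (continuous_bmat hH.toSmoothHomogeneous).matrix_det (hH.continuous_smul_sphGrad α)
    hH.det_pos h_var
  have h_zero : v = 0 := eq_zero_of_forall_sphere_inner_eq_zero fun x ↦ by
    rw [← h_eq x, real_inner_smul_left, inner_sphGrad_self hH.toSmoothHomogeneous, mul_zero]
  refine exists_eqOn_sphere_of_sphGrad_eq_zero hH.contDiffOn hn fun x ↦ ?_
  have h_norm : 0 < ‖gradient H x.1‖ :=
    norm_pos_iff.2 (hH.gradient_ne_zero (ne_zero_of_mem_unit_sphere x))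
  exact (smul_eq_zero.1 ((h_eq x).trans h_zero)).resolve_left (Real.rpow_pos_of_pos h_norm α).ne'

lemma volDens_eq_det (hH : IsSmoothSupportFunction H) (x : sphere (0 : Euc n) 1) :
    volDens n H x = (bmat n H x).det :=
  mul_div_cancel₀ _ (hH.pos_sphere x).ne'

lemma det_mul_norm_gradient_rpow (hH : IsSmoothSupportFunction H) (x : sphere (0 : Euc n) 1)
    (h_eq : H x ^ (p - 1) * ‖gradient H x.1‖ ^ (-α) * gaussCurv n H x = 1) :
    (bmat n H x).det * ‖gradient H x.1‖ ^ α = H x ^ p := by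
  have hH_pos := hH.pos_sphere x
  have h_norm : 0 < ‖gradient H x.1‖ :=
    norm_pos_iff.2 (hH.gradient_ne_zero (ne_zero_of_mem_unit_sphere x))
  have h_rpow := Real.rpow_pos_of_pos h_norm α
  have h_det := hH.det_pos x
  rw [gaussCurv, sigman, Real.rpow_neg h_norm.le, Real.rpow_sub_one hH_pos.ne'] at h_eq
  field_simp at h_eq
  linarith

end IsSmoothSupportFunction

end Variance

theorem variance_inequality_and_h_const_general {n : ℕ} {H : Euc n → ℝ} {p α : ℝ} (hn : n ≠ 0)
    (hH : IsSmoothSupportFunction H) (hα₁ : -1 ≤ α) (hα₀ : α ≤ 0) (hp : -((n : ℝ) + 1) < p)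
    (h_eq : ∀ x : sphere (0 : Euc n) 1,
      H x ^ (p - 1) * ‖gradient H x.1‖ ^ (-α) * gaussCurv n H x = 1) :
    ((∫ x : sphere (0 : Euc n) 1,
        volDens n H x * ‖(‖gradient H x‖ ^ α • sphGrad n H x)
          - (∫ y : sphere (0 : Euc n) 1, volDens n H y ∂(sphMeasure n))⁻¹ •
              (∫ y : sphere (0 : Euc n) 1,
                volDens n H y • (‖gradient H y‖ ^ α • sphGrad n H y) ∂(sphMeasure n))‖ ^ 2
        ∂(sphMeasure n))
      ≤ ((p + 1) / n) * ‖∫ y : sphere (0 : Euc n) 1,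
            volDens n H y • (‖gradient H y‖ ^ α • sphGrad n H y) ∂(sphMeasure n)‖ ^ 2
          / ∫ y : sphere (0 : Euc n) 1, volDens n H y ∂(sphMeasure n))
    ∧ (p ≤ -1 → ∃ c : ℝ, ∀ x ∈ sphere (0 : Euc n) 1, H x = c) := by
  have h_det (x : sphere (0 : Euc n) 1) := hH.det_mul_norm_gradient_rpow x (h_eq x)
  have h_var := hH.variance_smul_sphGrad_le hn hα₁ hα₀ (by linarith) h_det
  simp only [hH.volDens_eq_det]
  refine ⟨h_var, fun hp_le ↦ hH.exists_eqOn_sphere_of_variance_nonpos hn (h_var.trans ?_)⟩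
  refine div_nonpos_of_nonpos_of_nonneg ?_ hH.coneVolume_pos.le
  exact mul_nonpos_of_nonpos_of_nonneg
    (div_nonpos_of_nonpos_of_nonneg (by linarith) n.cast_nonneg) (sq_nonneg _)

/-- For a smooth, strictly convex body `K ⊂ ℝ^{n+1}` (`n ≥ 2`) with the
origin in its interior satisfying `h^{p-1}|Dh|^{n+1-q}𝒦 = 1` on `S^n`, with `-(n+1) < p`,
`n ≤ q ≤ n+1` and `α = q - n - 1`:
`∫ |r^α ∇̄h − (∫ r^α ∇̄h dV)/(∫ dV)|² dV ≤ ((p+1)/n)|∫ r^α ∇̄h dV|²/∫ dV`;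
in particular, if moreover `p ≤ -1`, then `h` is constant. -/
theorem variance_inequality_and_h_const
    (n : ℕ) (hn : 2 ≤ n) (p q α : ℝ) (hα : α = q - (n : ℝ) - 1)
    (H : Euc n → ℝ) (K : Set (Euc n))
    (hK : K = {y : Euc n | ∀ x : Euc n, ⟪x, y⟫ ≤ H x})
    (hhomog : ∀ c : ℝ, 0 < c → ∀ x : Euc n, H (c • x) = c * H x)
    (hconv : ConvexOn ℝ Set.univ H)
    (hsmooth : ContDiffOn ℝ (⊤ : ℕ∞) H {(0 : Euc n)}ᶜ)
    (hpos : ∀ x ∈ sphere (0 : Euc n) 1, 0 < H x)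
    (hposdef : ∀ x ∈ sphere (0 : Euc n) 1, (bmat n H x).PosDef)
    (heq : ∀ x ∈ sphere (0 : Euc n) 1,
      H x ^ (p - 1) * ‖gradient H x‖ ^ ((n : ℝ) + 1 - q) * gaussCurv n H x = 1)
    (hp1 : -((n : ℝ) + 1) < p)
    (hq1 : (n : ℝ) ≤ q) (hq2 : q ≤ (n : ℝ) + 1) :
    ((∫ x : sphere (0 : Euc n) 1,
        volDens n H x * ‖(‖gradient H x‖ ^ α • sphGrad n H x)
          - (∫ y : sphere (0 : Euc n) 1, volDens n H y ∂(sphMeasure n))⁻¹ •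
              (∫ y : sphere (0 : Euc n) 1,
                volDens n H y • (‖gradient H y‖ ^ α • sphGrad n H y) ∂(sphMeasure n))‖ ^ 2
        ∂(sphMeasure n))
      ≤ ((p + 1) / n) * ‖∫ y : sphere (0 : Euc n) 1,
            volDens n H y • (‖gradient H y‖ ^ α • sphGrad n H y) ∂(sphMeasure n)‖ ^ 2
          / ∫ y : sphere (0 : Euc n) 1, volDens n H y ∂(sphMeasure n))
    ∧ (p ≤ -1 → ∃ c : ℝ, ∀ x ∈ sphere (0 : Euc n) 1, H x = c) := by
  have hH : IsSmoothSupportFunction H :=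
    { contDiffOn := hsmooth
      map_smul := fun s x hs _ ↦ by rw [Real.rpow_one, smul_eq_mul, hhomog s hs x]
      pos_sphere := fun x ↦ hpos x x.2
      posDef := fun x ↦ hposdef x x.2 }
  have h_exponent : (n : ℝ) + 1 - q = -α := by rw [hα]; ring
  exact variance_inequality_and_h_const_general (by omega) hH (by linarith) (by linarith) hp1
    fun x ↦ h_exponent ▸ heq x x.2
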